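/- Let $F$ be a non-archimedean local field of characteristic zero, let $\epsilon=\pm1$, and let $(D,\iota)$ be one of: $D=F$ with $\iota=\mathrm{id}$; a quadratic field extension $D/F$ with $\iota$ the nontrivial Galois automorphism; the central division quaternion algebra $D$ over $F$ with $\iota$ its main involution. Let $E$ be the center of $D$, $|\cdot|_E$ its normalized absolute value, and $\delta_D=\sqrt{\dim_E D}\in\{1,2\}$. Fix a nontrivial continuous unitary character $\psi:F\to\mathbb C^\times$. Let $U$ be a finite-dimensional right $D$-vector space with a non-degenerate $F$-bilinear form $\langle\,,\rangle_U:U\times U\to D$ such that $\langle u,u'a\rangle_U=\langle u,u'\rangle_U a$ and $\langle u,u'\rangle_U=\epsilon\langle u',u\rangle_U^\iota$; assume that $U$ is split, i.e. $\dim U=2r$, where $r$ is the maximal dimension of a totally isotropic $D$-subspace of $U$. Let $G(U)$ be the isometry group of $U$. Let $\bar G(U)\to G(U)$ be the metaplectic double cover if $(D,\epsilon)=(F,-1)$ (the topological central extension of $\mathrm{Sp}(U)$ by $\{\pm1\}$ that is non-split unless $U=0$), and the identity map of $G(U)$ otherwise. Let $V$ be a finite-dimensional left $D$-vector space with a non-degenerate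 $F$-bilinear form $\langle\,,\rangle_V:V\times V\to D$ such that $\langle av,v'\rangle_V=a\langle v,v'\rangle_V$ and $\langle v,v'\rangle_V=-\epsilon\langle v',v\rangle_V^\iota$. The space $W=U\otimes_D V$ is a symplectic $F$-space under $\langle u\otimes v,u'\otimes v'\rangle=\tfrac12\big(\langle u,u'\rangle_U\langle v,v'\rangle_V^\iota+\langle v,v'\rangle_V\langle u,u'\rangle_U^\iota\big)$, and $H(W)=W\times F$ denotes the Heisenberg group with product $(w,t)(w',t')=(w+w',\,t+t'+\langle w,w'\rangle)$. The group $\bar G(U)$ acts on $H(W)$ through $G(U)$ by $g\cdot(u\otimes v,t)=(gu\otimes v,t)$. Let $\omega$ be a smooth complex representation of $\bar G(U)\ltimes H(W)$ whose restriction to $H(W)$ is irreducible, such that $(0,t)$ acts by $\psi(t)$ for every $t\in F$, and such that, if $(D,\epsilon)=(F,-1)$, the nontrivial element of the kernel of $\bar G(U)\to G(U)$ acts by $(-1)^{\dim V}$. For a Lagrangian subspace $X$ of $U$ (a totally isotropic $D$-subspace with $\dim U=2\dim X$) let $\bar P(X)\subset\bar G(U)$ be the preimage of the stabilizer of $X$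 in $G(U)$, and for $h\in\bar P(X)$ put $|h|_X=|\det(h|_X)|_E^{\delta_D}$, where $\det$ is the reduced norm of $\mathrm{End}_D(X)$. Let $\kappa_X:\bar P(X)\to\mathbb C^\times$ be the unique homomorphism for which there is a nonzero linear functional $\lambda$ on $\omega$, invariant under $X\otimes_D V\subset H(W)$, with $$\lambda(h\cdot\phi)=\kappa_X(h)\,|h|_X^{(\dim V)/2}\,\lambda(\phi)\qquad(h\in\bar P(X),\ \phi\in\omega).$$ Then, for any two Lagrangian subspaces $X$ and $Y$ of $U$, the characters $\kappa_X$ and $\kappa_Y$ are well defined (they exist and are unique), and $\kappa_X(h)=\kappa_Y(h)$ for all $h\in\bar P(X)\cap\bar P(Y)$. -/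

import Mathlib

noncomputable section

open scoped TensorProduct NNReal

namespace Kudla

set_option linter.unusedSectionVars false

/-! ### The division algebra `D` with its involution -/

/-- `D` (a division ring which is an `F`-algebra, with involutive anti-automorphism `ι = star`)
is one of the following:
* `D = F` and `ι` is the identity;
* `D` is a quadratic field extension of `F` and `ι` is the nontrivial element of the Galois group;
* `D` is a central division quaternion algebra over `F` and `ι` is the main involution, that is,
  the involution for which all the norms `x * ι x` lie in `F`. -/
class IsTypeI (F D : Type*) [Field F] [DivisionRing D] [Algebra F D] [StarRing D] : Prop where
  star_algebraMap : ∀ c : F, star (algebraMap F D c) = algebraMap F D c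
  cases :
    (Module.finrank F D = 1 ∧ ∀ x : D, star x = x) ∨
    (Module.finrank F D = 2 ∧ (∀ x y : D, x * y = y * x) ∧ ∃ x : D, star x ≠ x) ∨
    (Module.finrank F D = 4 ∧ Algebra.IsCentral F D ∧
      ∀ x : D, x * star x ∈ Set.range (algebraMap F D))

section Algebra

variable {F D : Type*} [Field F] [DivisionRing D] [Algebra F D] [StarRing D] [IsTypeI F D]

variable (F D) in
/-- The involution `ι` as an `F`-linear map. -/
def starLin : D →ₗ[F] D where
  toFun := star
  map_add' := star_add
  map_smul' c x := by
    rw [Algebra.smul_def, star_mul, IsTypeI.star_algebraMap, ← Algebra.commutes,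
      ← Algebra.smul_def, RingHom.id_apply]

variable (F) in
theorem add_star_mem (x : D) : ∃ c : F, algebraMap F D c = x + star x := by
  rcases IsTypeI.cases (F := F) (D := D) with ⟨h, -⟩ | ⟨h, -, y, hy⟩ | ⟨-, -, h⟩
  · obtain ⟨c, hc⟩ := (finrank_eq_one_iff_of_nonzero' (1 : D) one_ne_zero).1 h (x + star x)
    exact ⟨c, by rw [Algebra.algebraMap_eq_smul_one, hc]⟩
  · by_contra hne
    set z := x + star x with hz
    have hzs : star z = z := by rw [hz, star_add, star_star, add_comm]
    have hli : LinearIndependent F ![(1 : D), z] := by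
      rw [LinearIndependent.pair_iff' one_ne_zero]
      intro c hc
      exact hne ⟨c, by rw [Algebra.algebraMap_eq_smul_one, hc]⟩
    have : FiniteDimensional F D := Module.finite_of_finrank_pos (by omega)
    have hsp := hli.span_eq_top_of_card_eq_finrank' (by simp [h])
    have hyt : y ∈ Submodule.span F (Set.range ![(1 : D), z]) := hsp ▸ Submodule.mem_top
    rw [Matrix.range_cons, Matrix.range_cons, Matrix.range_empty, Set.union_empty,
      Set.singleton_union, Submodule.mem_span_pair] at hyt
    obtain ⟨a, b, rfl⟩ := hyt
    apply hy
    change starLin F D _ = _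
    rw [map_add, map_smul, map_smul]
    change a • star (1 : D) + b • star z = _
    rw [star_one, hzs]
  · obtain ⟨a, ha⟩ := h x
    obtain ⟨b, hb⟩ := h (x + 1)
    refine ⟨b - a - 1, ?_⟩
    rw [map_sub, map_sub, ha, hb, map_one, star_add, star_one]
    noncomm_ring

variable (F D) in
/-- The `F`-linear map `D → F`, `x ↦ (x + ι x) / 2`. -/
def halfTrace : D →ₗ[F] F where
  toFun x := 2⁻¹ * (add_star_mem F x).choose
  map_add' x y := by
    rw [← mul_add]
    congr 1
    apply (algebraMap F D).injective
    rw [map_add, (add_star_mem F (x + y)).choose_spec, (add_star_mem F x).choose_spec,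
      (add_star_mem F y).choose_spec, star_add]
    abel
  map_smul' c x := by
    rw [RingHom.id_apply, smul_eq_mul, mul_left_comm]
    congr 1
    apply (algebraMap F D).injective
    rw [map_mul, (add_star_mem F (c • x)).choose_spec, (add_star_mem F x).choose_spec, mul_add,
      ← Algebra.smul_def, ← Algebra.smul_def]
    exact congrArg _ ((starLin F D).map_smul c x)

theorem algebraMap_halfTrace (x : D) :
    algebraMap F D (halfTrace F D x) = algebraMap F D 2⁻¹ * (x + star x) := by
  change algebraMap F D (2⁻¹ * (add_star_mem F x).choose) = _
  rw [map_mul, (add_star_mem F x).choose_spec]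

theorem halfTrace_mul_comm [CharZero F] (x y : D) :
    halfTrace F D (x * y) = halfTrace F D (y * x) := by
  apply (algebraMap F D).injective
  rw [algebraMap_halfTrace, algebraMap_halfTrace]
  congr 1
  rcases eq_or_ne y 0 with rfl | hy
  · simp
  obtain ⟨c, hc⟩ := add_star_mem F (y * x)
  obtain ⟨d, hd⟩ := add_star_mem F y
  obtain ⟨n, hn⟩ := add_star_mem F (y * star y)
  have h1 : star y * y = y * star y := by
    have : star y = algebraMap F D d - y := by rw [hd]; abel
    rw [this, sub_mul, mul_sub, Algebra.commutes]
  have h2 : y * star y = algebraMap F D (2⁻¹ * n) := by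
    have h2' : (2 : D) = algebraMap F D 2 := (map_ofNat (algebraMap F D) 2).symm
    have h20 : (algebraMap F D 2) ≠ 0 :=
      (map_ne_zero (algebraMap F D)).2 two_ne_zero
    rw [map_mul, hn, star_mul, star_star, ← two_mul, map_inv₀, h2', inv_mul_cancel_left₀ h20]
  apply mul_left_cancel₀ hy
  rw [← hc, ← Algebra.commutes, hc, mul_add, add_mul, star_mul, star_mul, mul_assoc (star x), h1,
    ← mul_assoc y (star y), h2, Algebra.commutes, mul_assoc]

end Algebra

/-! ### Hermitian spaces -/

/-- A non-degenerate `ε`-Hermitian form on a right `D`-vector space `U` (that is, a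
`Dᵐᵒᵖ`-module; `u a` is written `MulOpposite.op a • u`). -/
structure RightHermitianForm (F D : Type*) [Field F] [DivisionRing D] [Algebra F D] [StarRing D]
    (ε : ℤˣ) (U : Type*) [AddCommGroup U] [Module F U] [Module Dᵐᵒᵖ U] where
  form : U →ₗ[F] U →ₗ[F] D
  form_smul : ∀ (u u' : U) (a : D), form u (MulOpposite.op a • u') = form u u' * a
  form_symm : ∀ u u' : U, form u u' = ε • star (form u' u)
  nondegenerate : ∀ u : U, (∀ u' : U, form u u' = 0) → u = 0

/-- A non-degenerate `ε`-Hermitian form on a left `D`-vector space `V`. -/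
structure LeftHermitianForm (F D : Type*) [Field F] [DivisionRing D] [Algebra F D] [StarRing D]
    (ε : ℤˣ) (V : Type*) [AddCommGroup V] [Module F V] [Module D V] where
  form : V →ₗ[F] V →ₗ[F] D
  smul_form : ∀ (v v' : V) (a : D), form (a • v) v' = a * form v v'
  form_symm : ∀ v v' : V, form v v' = ε • star (form v' v)
  nondegenerate : ∀ v : V, (∀ v' : V, form v v' = 0) → v = 0

section Spaces

variable {F D : Type*} [Field F] [DivisionRing D] [Algebra F D] [StarRing D]
  {ε : ℤˣ} {U : Type*} [AddCommGroup U] [Module F U] [Module Dᵐᵒᵖ U]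

theorem star_units_smul (e : ℤˣ) (x : D) : star (e • x) = e • star x := by
  rcases Int.units_eq_one_or e with rfl | rfl <;> simp [Units.smul_def]

theorem RightHermitianForm.smul_form (hU : RightHermitianForm F D ε U) (u u' : U) (a : D) :
    hU.form (MulOpposite.op a • u) u' = star a * hU.form u u' := by
  rw [hU.form_symm, hU.form_smul, star_mul, hU.form_symm u u', mul_smul_comm]

theorem LeftHermitianForm.form_smul {V : Type*} [AddCommGroup V] [Module F V] [Module D V]
    (hV : LeftHermitianForm F D ε V) (v v' : V) (a : D) :
    hV.form v (a • v') = hV.form v v' * star a := by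
  rw [hV.form_symm, hV.smul_form, star_mul, hV.form_symm v v', smul_mul_assoc]

/-- `X` is totally isotropic. -/
def IsTotallyIsotropic (hU : RightHermitianForm F D ε U) (X : Submodule Dᵐᵒᵖ U) : Prop :=
  ∀ x ∈ X, ∀ y ∈ X, hU.form x y = 0

/-- The split rank: the maximal dimension of a totally isotropic subspace. -/
def splitRank (hU : RightHermitianForm F D ε U) : ℕ :=
  sSup {n : ℕ | ∃ X : Submodule Dᵐᵒᵖ U,
    IsTotallyIsotropic hU X ∧ Module.finrank Dᵐᵒᵖ X = n}

/-- `U` is split: `dim U = 2 rank U`. -/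
def IsSplit (hU : RightHermitianForm F D ε U) : Prop :=
  Module.finrank Dᵐᵒᵖ U = 2 * splitRank hU

/-- `X` is a Lagrangian subspace. -/
def IsLagrangian (hU : RightHermitianForm F D ε U) (X : Submodule Dᵐᵒᵖ U) : Prop :=
  IsTotallyIsotropic hU X ∧ Module.finrank Dᵐᵒᵖ U = 2 * Module.finrank Dᵐᵒᵖ X

/-- The isometry group `G(U)`. -/
def isometryGroup (hU : RightHermitianForm F D ε U) : Subgroup (U ≃ₗ[Dᵐᵒᵖ] U) where
  carrier := {g | ∀ u u' : U, hU.form (g u) (g u') = hU.form u u'}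
  one_mem' _ _ := rfl
  mul_mem' {g g'} hg hg' u u' := by
    rw [LinearEquiv.mul_apply, LinearEquiv.mul_apply, hg, hg']
  inv_mem' {g} hg u u' := by
    rw [← hg (g⁻¹ u) (g⁻¹ u')]
    change hU.form (g (g.symm u)) (g (g.symm u')) = _
    rw [g.apply_symm_apply, g.apply_symm_apply]

/-- `G(U)` with the topology of pointwise convergence, for the canonical topology of the
finite-dimensional `F`-vector space `U`. -/
instance [TopologicalSpace F] (hU : RightHermitianForm F D ε U) :
    TopologicalSpace (isometryGroup hU) :=
  TopologicalSpace.induced (fun (g : isometryGroup hU) (u : U) => (g : U ≃ₗ[Dᵐᵒᵖ] U) u)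
    (@Pi.topologicalSpace U (fun _ => U) (fun _ => moduleTopology F U))

/-- The Siegel parabolic `P(X)`: the stabilizer of `X` in `G(U)`. -/
def siegelParabolic (hU : RightHermitianForm F D ε U) (X : Submodule Dᵐᵒᵖ U) :
    Subgroup (isometryGroup hU) where
  carrier := {g | ∀ x : U, (g : U ≃ₗ[Dᵐᵒᵖ] U) x ∈ X ↔ x ∈ X}
  one_mem' _ := Iff.rfl
  mul_mem' {g g'} hg hg' x := (hg _).trans (hg' x)
  inv_mem' {g} hg x := by
    rw [← hg]
    change (g : U ≃ₗ[Dᵐᵒᵖ] U) ((g : U ≃ₗ[Dᵐᵒᵖ] U).symm x) ∈ X ↔ _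
    rw [LinearEquiv.apply_symm_apply]

/-- The restriction to `X` of an element of `P(X)`. -/
def restrictTo (hU : RightHermitianForm F D ε U) (X : Submodule Dᵐᵒᵖ U)
    (g : siegelParabolic hU X) : Module.End Dᵐᵒᵖ X :=
  ((g : isometryGroup hU) : U ≃ₗ[Dᵐᵒᵖ] U).toLinearMap.restrict fun x hx => (g.2 x).2 hx

end Spaces

/-! ### The cover `Ḡ(U) → G(U)` -/

section Cover

variable {F D : Type*} [Field F] [TopologicalSpace F] [DivisionRing D] [Algebra F D] [StarRing D]
  {ε : ℤˣ} {U : Type*} [AddCommGroup U] [Module F U] [Module Dᵐᵒᵖ U]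

variable (F D) in
/-- `(D, ε) = (F, -1)`: the case where `U` is a symplectic space. -/
def IsSymplecticCase (ε : ℤˣ) : Prop := Module.finrank F D = 1 ∧ ε = -1

/-- `p : Gb → G(U)` is a topological central extension by a group of order two (so `Gb` is a
Hausdorff topological group and `p` is a continuous open surjection) which does not split, unless
`U = 0`; a splitting is a continuous homomorphism which is a section of `p`. -/
structure IsMetaplecticCover (hU : RightHermitianForm F D ε U) {Gb : Type*} [Group Gb]
    [TopologicalSpace Gb] (p : Gb →* isometryGroup hU) : Prop where
  t2 : T2Space Gb
  isOpenQuotientMap : IsOpenQuotientMap p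
  central : p.ker ≤ Subgroup.center Gb
  card_ker : Nat.card p.ker = 2
  nonsplit : Nontrivial U →
    ¬ ∃ s : isometryGroup hU →* Gb, Continuous s ∧ ∀ g, p (s g) = g

/-- `p : Gb → G(U)` is the covering homomorphism `Ḡ(U) → G(U)`: it is the metaplectic double cover
if `U` is a symplectic space, and an isomorphism of topological groups otherwise. -/
structure IsModifiedCover (hU : RightHermitianForm F D ε U) {Gb : Type*} [Group Gb]
    [TopologicalSpace Gb] (p : Gb →* isometryGroup hU) : Prop where
  metaplectic : IsSymplecticCase F D ε → IsMetaplecticCover hU p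
  linear : ¬ IsSymplecticCase F D ε → IsHomeomorph p

end Cover

/-! ### The tensor product `U ⊗_D V` and its symplectic form -/

section Tensor

variable {F D : Type*} [Field F] [CharZero F] [DivisionRing D] [Algebra F D] [StarRing D]
  [IsTypeI F D] {ε ε' : ℤˣ}
  {U : Type*} [AddCommGroup U] [Module F U] [Module Dᵐᵒᵖ U] [IsScalarTower F Dᵐᵒᵖ U]
  {V : Type*} [AddCommGroup V] [Module F V] [Module D V] [IsScalarTower F D V]

variable (F D U V) in
/-- The relations `u a ⊗ v = u ⊗ a v`. -/
def balancing : Submodule F (U ⊗[F] V) :=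
  Submodule.span F {x | ∃ (u : U) (a : D) (v : V),
    x = (MulOpposite.op a • u) ⊗ₜ[F] v - u ⊗ₜ[F] (a • v)}

variable (F D U V) in
/-- The tensor product `U ⊗_D V` of the right `D`-space `U` and the left `D`-space `V`. -/
abbrev DTensor : Type _ := (U ⊗[F] V) ⧸ balancing F D U V

variable (F D) in
/-- The pure tensor `u ⊗ v` in `U ⊗_D V`. -/
def dtmul (u : U) (v : V) : DTensor F D U V := Submodule.Quotient.mk (u ⊗ₜ[F] v)

/-- The form `(⟨u, u'⟩ ⟨v, v'⟩^ι + ⟨v, v'⟩ ⟨u, u'⟩^ι) / 2` on `U ⊗_F V`. -/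
def preTensorForm (hU : RightHermitianForm F D ε U) (hV : LeftHermitianForm F D ε' V) :
    U ⊗[F] V →ₗ[F] U ⊗[F] V →ₗ[F] F :=
  (LinearMap.BilinMap.tmul hU.form hV.form).compr₂
    (TensorProduct.lift (((LinearMap.mul F D).compl₂ (starLin F D)).compr₂ (halfTrace F D)))

theorem preTensorForm_tmul (hU : RightHermitianForm F D ε U) (hV : LeftHermitianForm F D ε' V)
    (u u' : U) (v v' : V) :
    preTensorForm hU hV (u ⊗ₜ v) (u' ⊗ₜ v')
      = halfTrace F D (hU.form u u' * star (hV.form v v')) := rfl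

/-- The symplectic form on `U ⊗_D V`. -/
def tensorForm (hU : RightHermitianForm F D ε U) (hV : LeftHermitianForm F D ε' V) :
    DTensor F D U V →ₗ[F] DTensor F D U V →ₗ[F] F :=
  (preTensorForm hU hV).liftQ₂ (balancing F D U V) (balancing F D U V)
    (by
      rw [balancing, Submodule.span_le]
      rintro _ ⟨u, a, v, rfl⟩
      rw [SetLike.mem_coe, LinearMap.mem_ker, map_sub, sub_eq_zero]
      ext u' v'
      simp only [TensorProduct.AlgebraTensorModule.curry_apply, TensorProduct.curry_apply,
        LinearMap.restrictScalars_self]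
      rw [preTensorForm_tmul, preTensorForm_tmul, hU.smul_form, hV.smul_form, star_mul,
        mul_assoc, halfTrace_mul_comm, mul_assoc])
    (by
      rw [balancing, Submodule.span_le]
      rintro _ ⟨u', a, v', rfl⟩
      rw [SetLike.mem_coe, LinearMap.mem_ker, map_sub, sub_eq_zero]
      ext u v
      simp only [TensorProduct.AlgebraTensorModule.curry_apply, TensorProduct.curry_apply,
        LinearMap.restrictScalars_self, LinearMap.flip_apply]
      rw [preTensorForm_tmul, preTensorForm_tmul, hU.form_smul, hV.form_smul, star_mul,
        star_star, mul_assoc])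

theorem tensorForm_dtmul (hU : RightHermitianForm F D ε U) (hV : LeftHermitianForm F D ε' V)
    (u u' : U) (v v' : V) :
    algebraMap F D (tensorForm hU hV (dtmul F D u v) (dtmul F D u' v'))
      = algebraMap F D 2⁻¹ * (hU.form u u' * star (hV.form v v')
          + hV.form v v' * star (hU.form u u')) := by
  change algebraMap F D (preTensorForm hU hV (u ⊗ₜ v) (u' ⊗ₜ v')) = _
  rw [preTensorForm_tmul, algebraMap_halfTrace, star_mul, star_star]

variable (V) in
/-- The subspace `X ⊗_D V` of `U ⊗_D V`. -/
def subTensor (X : Submodule Dᵐᵒᵖ U) : Submodule F (DTensor F D U V) :=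
  Submodule.span F {w | ∃ x ∈ X, ∃ v : V, w = dtmul F D x v}

variable (F V) in
/-- The action `u ⊗ v ↦ g u ⊗ v` of a `D`-linear map `g` on `U ⊗_D V`. -/
def tensorMap (g : U →ₗ[Dᵐᵒᵖ] U) : DTensor F D U V →ₗ[F] DTensor F D U V :=
  Submodule.mapQ _ _ (TensorProduct.map (g.restrictScalars F) LinearMap.id)
    (by
      rw [balancing, Submodule.span_le]
      rintro _ ⟨u, a, v, rfl⟩
      refine Submodule.subset_span ⟨g u, a, v, ?_⟩
      rw [map_sub, TensorProduct.map_tmul, TensorProduct.map_tmul, LinearMap.restrictScalars_apply,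
        map_smul]
      rfl)

theorem tensorMap_dtmul (g : U →ₗ[Dᵐᵒᵖ] U) (u : U) (v : V) :
    tensorMap F V g (dtmul F D u v) = dtmul F D (g u) v := rfl

theorem DTensor.induction {P : DTensor F D U V → Prop} (w : DTensor F D U V) (h0 : P 0)
    (h1 : ∀ u v, P (dtmul F D u v)) (h2 : ∀ x y, P x → P y → P (x + y)) : P w := by
  obtain ⟨x, rfl⟩ := Submodule.Quotient.mk_surjective _ w
  induction x using TensorProduct.induction_on with
  | zero => exact h0
  | tmul u v => exact h1 u v
  | add x y hx hy => exact h2 _ _ hx hy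

theorem tensorMap_one (w : DTensor F D U V) : tensorMap F V (1 : U →ₗ[Dᵐᵒᵖ] U) w = w := by
  induction w using DTensor.induction with
  | h0 => exact map_zero _
  | h1 u v => rfl
  | h2 x y hx hy => rw [map_add, hx, hy]

theorem tensorMap_mul (g g' : U →ₗ[Dᵐᵒᵖ] U) (w : DTensor F D U V) :
    tensorMap F V (g * g') w = tensorMap F V g (tensorMap F V g' w) := by
  induction w using DTensor.induction with
  | h0 => simp only [map_zero]
  | h1 u v => rfl
  | h2 x y hx hy => simp only [map_add, hx, hy]

theorem tensorForm_tensorMap (hU : RightHermitianForm F D ε U) (hV : LeftHermitianForm F D ε' V)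
    (g : isometryGroup hU) (w w' : DTensor F D U V) :
    tensorForm hU hV (tensorMap F V (g : U ≃ₗ[Dᵐᵒᵖ] U).toLinearMap w)
      (tensorMap F V (g : U ≃ₗ[Dᵐᵒᵖ] U).toLinearMap w') = tensorForm hU hV w w' := by
  induction w using DTensor.induction with
  | h0 => simp only [map_zero, LinearMap.zero_apply]
  | h2 x y hx hy => simp only [map_add, LinearMap.add_apply, hx, hy]
  | h1 u v =>
    induction w' using DTensor.induction with
    | h0 => simp only [map_zero]
    | h2 x y hx hy => simp only [map_add, hx, hy]
    | h1 u' v' =>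
      apply (algebraMap F D).injective
      rw [tensorMap_dtmul, tensorMap_dtmul, tensorForm_dtmul, tensorForm_dtmul]
      simp only [LinearEquiv.coe_coe, g.2 u u']

end Tensor

/-! ### Heisenberg groups and the Jacobi group -/

/-- The Heisenberg group `W × F` of a space with bilinear form `B`, with multiplication
`(w, t) (w', t') = (w + w', t + t' + B w w')`. -/
@[ext]
structure Heisenberg {F W : Type*} [Field F] [AddCommGroup W] [Module F W]
    (B : W →ₗ[F] W →ₗ[F] F) where
  vec : W
  scal : F

section Heisenberg

variable {F W : Type*} [Field F] [AddCommGroup W] [Module F W] {B : W →ₗ[F] W →ₗ[F] F}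

instance : Mul (Heisenberg B) := ⟨fun a b => ⟨a.vec + b.vec, a.scal + b.scal + B a.vec b.vec⟩⟩
instance : One (Heisenberg B) := ⟨⟨0, 0⟩⟩
instance : Inv (Heisenberg B) := ⟨fun a => ⟨-a.vec, -a.scal + B a.vec a.vec⟩⟩

theorem Heisenberg.mul_def (a b : Heisenberg B) :
    a * b = ⟨a.vec + b.vec, a.scal + b.scal + B a.vec b.vec⟩ := rfl
theorem Heisenberg.one_def : (1 : Heisenberg B) = ⟨0, 0⟩ := rfl
theorem Heisenberg.inv_def (a : Heisenberg B) :
    a⁻¹ = ⟨-a.vec, -a.scal + B a.vec a.vec⟩ := rfl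

instance : Group (Heisenberg B) :=
  Group.ofLeftAxioms
    (fun a b c => by
      simp only [Heisenberg.mul_def, map_add, LinearMap.add_apply]
      ext
      · exact add_assoc _ _ _
      · dsimp only
        ring)
    (fun a => by simp [Heisenberg.mul_def, Heisenberg.one_def])
    (fun a => by simp [Heisenberg.mul_def, Heisenberg.one_def, Heisenberg.inv_def])

/-- The topology of `W × F`, where `W` has the canonical topology of a finite-dimensional
`F`-vector space. -/
instance [TopologicalSpace F] : TopologicalSpace (Heisenberg B) :=
  TopologicalSpace.induced (fun a => (a.vec, a.scal))
    (@instTopologicalSpaceProd W F (moduleTopology F W) _)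

end Heisenberg

section Jacobi

variable {F D : Type*} [Field F] [CharZero F] [DivisionRing D] [Algebra F D] [StarRing D]
  [IsTypeI F D] {ε ε' : ℤˣ}
  {U : Type*} [AddCommGroup U] [Module F U] [Module Dᵐᵒᵖ U] [IsScalarTower F Dᵐᵒᵖ U]
  {V : Type*} [AddCommGroup V] [Module F V] [Module D V] [IsScalarTower F D V]

/-- The action `g · (u ⊗ v, t) = (g u ⊗ v, t)` of `G(U)` on `H(U ⊗_D V)`. -/
def isometryAct (hU : RightHermitianForm F D ε U) (hV : LeftHermitianForm F D ε' V) :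
    isometryGroup hU →* MulAut (Heisenberg (tensorForm hU hV)) where
  toFun g :=
    { toFun := fun a => ⟨tensorMap F V (g : U ≃ₗ[Dᵐᵒᵖ] U).toLinearMap a.vec, a.scal⟩
      invFun := fun a => ⟨tensorMap F V ((g⁻¹ : isometryGroup hU) : U ≃ₗ[Dᵐᵒᵖ] U).toLinearMap a.vec,
        a.scal⟩
      left_inv := fun a => by
        ext
        · dsimp only
          rw [← tensorMap_mul]
          convert tensorMap_one a.vec
          ext u
          exact LinearEquiv.symm_apply_apply _ u
        · rfl
      right_inv := fun a => by
        ext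
        · dsimp only
          rw [← tensorMap_mul]
          convert tensorMap_one a.vec
          ext u
          exact LinearEquiv.apply_symm_apply (g : U ≃ₗ[Dᵐᵒᵖ] U) u
        · rfl
      map_mul' := fun a b => by
        simp only [Heisenberg.mul_def, map_add, tensorForm_tensorMap] }
  map_one' := by
    ext a
    · exact tensorMap_one a.vec
    · rfl
  map_mul' g g' := by
    ext a
    · exact tensorMap_mul _ _ a.vec
    · rfl

/-- The modified Jacobi group `J̄_U(V) = Ḡ(U) ⋉ H(U ⊗_D V)`, where `Ḡ(U) = Gb` acts through the
covering homomorphism `p`. -/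
abbrev Jacobi (hU : RightHermitianForm F D ε U) (hV : LeftHermitianForm F D ε' V)
    {Gb : Type*} [Group Gb] (p : Gb →* isometryGroup hU) : Type _ :=
  Heisenberg (tensorForm hU hV) ⋊[(isometryAct hU hV).comp p] Gb

/-- `ω` is a genuine smooth oscillator representation of `J̄_U(V)`, so that `(V, ω)` is an enhanced
oscillator representation of `Ḡ(U)`. -/
structure IsEnhancedOscillator [TopologicalSpace F] (ψ : AddChar F Circle)
    (hU : RightHermitianForm F D ε U) (hV : LeftHermitianForm F D (-ε) V)
    {Gb : Type*} [Group Gb] [TopologicalSpace Gb] (p : Gb →* isometryGroup hU)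
    {S : Type*} [AddCommGroup S] [Module ℂ S] (ω : Representation ℂ (Jacobi hU hV p) S) :
    Prop where
  /-- The stabilizer of every vector is open, `J̄_U(V)` having the topology of the product
  `H(U ⊗_D V) × Ḡ(U)`. -/
  smooth : ∀ φ : S,
    IsOpen {x : Heisenberg (tensorForm hU hV) × Gb | ω ⟨x.1, x.2⟩ φ = φ}
  /-- The restriction to the Heisenberg group is irreducible. -/
  irreducible : Representation.IsIrreducible
    (ω.comp SemidirectProduct.inl : Representation ℂ (Heisenberg (tensorForm hU hV)) S)
  /-- The restriction to the Heisenberg group has central character `ψ`. -/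
  central_char : ∀ (t : F) (φ : S), ω (SemidirectProduct.inl ⟨0, t⟩) φ = (ψ t : ℂ) • φ
  /-- If `U` is symplectic, the nontrivial element of the kernel of `Ḡ(U) → G(U)` acts by
  `(-1) ^ dim V`. -/
  genuine : IsSymplecticCase F D ε → ∀ z ∈ p.ker, z ≠ 1 →
    ∀ φ : S, ω (SemidirectProduct.inr z) φ = (-1 : ℂ) ^ Module.finrank D V • φ

end Jacobi

/-! ### The character `|·|_X` -/

/-- The normalized absolute value of a locally compact field `E`: `|x|_E` is the factor by which
multiplication by `x` scales Haar measure, and `|0|_E = 0`. -/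
def normalizedAbs {E : Type*} [Field E] [TopologicalSpace E] [IsTopologicalRing E]
    [LocallyCompactSpace E] (x : E) : ℝ :=
  open Classical in
  if h : x = 0 then 0 else (MeasureTheory.distribHaarChar E (Units.mk0 x h) : ℝ≥0)

/-- The degree of a central simple algebra: the square root of its dimension. -/
def csaDegree (E A : Type*) [Field E] [Ring A] [Algebra E A] : ℕ :=
  Nat.sqrt (Module.finrank E A)

/-- `c` is the reduced norm of the element `a` of the central simple `E`-algebra `A`: it is the
determinant of the image of `a` under an isomorphism of `A`, after extension of scalars to an
algebraic closure of `E`, with a matrix algebra. -/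
def IsReducedNorm {E A : Type*} [Field E] [Ring A] [Algebra E A] (a : A) (c : E) : Prop :=
  ∃ (n : ℕ) (f : AlgebraicClosure E ⊗[E] A ≃ₐ[AlgebraicClosure E]
      Matrix (Fin n) (Fin n) (AlgebraicClosure E)),
    algebraMap E (AlgebraicClosure E) c = (f (1 ⊗ₜ[E] a)).det

/-- The reduced norm of a central simple `E`-algebra `A`. -/
def reducedNorm (E : Type*) {A : Type*} [Field E] [Ring A] [Algebra E A] (a : A) : E :=
  open Classical in
  if h : ∃ c : E, IsReducedNorm a c then h.choose else 0

section SiegelCharacter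

variable {F D : Type*} [Field F] [DivisionRing D] [Algebra F D] [StarRing D]
  (E : Type*) [Field E] [Algebra E D] [TopologicalSpace E] [IsTopologicalRing E]
  [LocallyCompactSpace E] {ε : ℤˣ}
  {U : Type*} [AddCommGroup U] [Module F U] [Module E U] [Module Dᵐᵒᵖ U]
  [IsScalarTower E Dᵐᵒᵖ U]

/-- `|g|_X = |det (g|_X)|_E ^ δ_D` for `g` in `P(X)`, where `E` is the center of `D`, `det` is the
reduced norm on the central simple `E`-algebra `End_D(X)` and `δ_D` is the degree of `D`. -/
def siegelAbs (hU : RightHermitianForm F D ε U) (X : Submodule Dᵐᵒᵖ U)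
    (g : siegelParabolic hU X) : ℝ :=
  normalizedAbs (reducedNorm E (restrictTo hU X g)) ^ csaDegree E D

end SiegelCharacter

/-! ### The characters `κ_{σ,X}` -/

section KudlaCharacter

variable {F D : Type*} [Field F] [CharZero F] [DivisionRing D] [Algebra F D] [StarRing D]
  [IsTypeI F D]
  (E : Type*) [Field E] [Algebra E D] [TopologicalSpace E] [IsTopologicalRing E]
  [LocallyCompactSpace E] {ε ε' : ℤˣ}
  {U : Type*} [AddCommGroup U] [Module F U] [Module E U] [Module Dᵐᵒᵖ U]
  [IsScalarTower F Dᵐᵒᵖ U] [IsScalarTower E Dᵐᵒᵖ U]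
  {V : Type*} [AddCommGroup V] [Module F V] [Module D V] [IsScalarTower F D V]
  {hU : RightHermitianForm F D ε U} {hV : LeftHermitianForm F D ε' V}
  {Gb : Type*} [Group Gb] {p : Gb →* isometryGroup hU}
  {S : Type*} [AddCommGroup S] [Module ℂ S]

/-- The preimage `P̄(X)` of `P(X)` in `Ḡ(U)`. -/
def siegelCover (p : Gb →* isometryGroup hU) (X : Submodule Dᵐᵒᵖ U) : Subgroup Gb :=
  (siegelParabolic hU X).comap p

/-- `l` is a nonzero linear functional on `ω` which is invariant under
`X ⊗_D V ⊂ H(U ⊗_D V)`. -/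
def IsInvariantFunctional (ω : Representation ℂ (Jacobi hU hV p) S) (X : Submodule Dᵐᵒᵖ U)
    (l : Module.Dual ℂ S) : Prop :=
  l ≠ 0 ∧ ∀ w ∈ subTensor (F := F) V X, ∀ φ : S, l (ω (SemidirectProduct.inl ⟨w, 0⟩) φ) = l φ

/-- `κ` is the character `κ_{σ,X}` of `P̄(X)`, where `σ = (V, ω)`:
`l (h · φ) = κ h * |h|_X ^ (dim V / 2) * l φ` for a nonzero linear functional `l` on `ω` which is
invariant under `X ⊗_D V`. -/
def IsKudlaCharacter (ω : Representation ℂ (Jacobi hU hV p) S) (X : Submodule Dᵐᵒᵖ U)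
    (κ : siegelCover p X →* ℂˣ) : Prop :=
  ∃ l : Module.Dual ℂ S, IsInvariantFunctional ω X l ∧
    ∀ (h : siegelCover p X) (φ : S),
      l (ω (SemidirectProduct.inr (h : Gb)) φ)
        = (κ h : ℂ) *
          ((siegelAbs E hU X ⟨p h, h.2⟩ ^ ((Module.finrank D V : ℝ) / 2) : ℝ) : ℂ) * l φ

end KudlaCharacter

end Kudla

end

namespace Kudla

open ValuativeRel Topology Matrix

set_option linter.unusedSectionVars false

section Lattice

variable {F : Type*} [Field F] [ValuativeRel F] [TopologicalSpace F] [IsNonarchimedeanLocalField F]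
  {ι : Type*}

/-- The lattice of vectors in `F ^ ι` all of whose coordinates are bounded by `c`. -/
def ball (ι : Type*) (c : F) : AddSubgroup (ι → F) where
  carrier := {x | ∀ i, valuation F (x i) ≤ valuation F c}
  zero_mem' i := by simp
  add_mem' hx hy i := (valuation F).map_add_le (hx i) (hy i)
  neg_mem' hx i := by simpa only [Pi.neg_apply, Valuation.map_neg] using hx i

theorem mem_ball {c : F} {x : ι → F} :
    x ∈ ball ι c ↔ ∀ i, valuation F (x i) ≤ valuation F c := Iff.rfl

theorem ball_mono {c d : F} (h : valuation F c ≤ valuation F d) : ball ι c ≤ ball ι d :=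
  fun _ hx i => (hx i).trans h

theorem isCompact_ball (c : F) : IsCompact (ball ι c : Set (ι → F)) := by
  have := isCompact_univ_pi (X := fun _ : ι => F)
    (s := fun _ => {x | valuation F x ≤ valuation F c})
    fun _ => IsNonarchimedeanLocalField.isCompact_closedBall F _
  convert this using 1
  ext x
  simp [mem_ball]

theorem valuation_le_mem_nhds {c : F} (hc : c ≠ 0) :
    {x | valuation F x ≤ valuation F c} ∈ 𝓝 (0 : F) := by
  rw [(IsValuativeTopology.hasBasis_nhds_zero' F).mem_iff]
  exact ⟨valuation F c, by simpa using hc, fun x hx => Set.mem_ofPred.2 (le_of_lt (Set.mem_ofPred.1 hx))⟩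

theorem ball_mem_nhds [Finite ι] {c : F} (hc : c ≠ 0) : (ball ι c : Set (ι → F)) ∈ 𝓝 0 := by
  have := set_pi_mem_nhds (A := fun _ : ι => F) (x := 0) Set.finite_univ
    (s := fun _ => {x | valuation F x ≤ valuation F c}) fun _ _ => valuation_le_mem_nhds hc
  convert this using 1
  ext x
  simp [mem_ball]

theorem isOpen_ball [Finite ι] {c : F} (hc : c ≠ 0) : IsOpen (ball ι c : Set (ι → F)) :=
  (ball ι c).isOpen_of_mem_nhds (ball_mem_nhds hc)

theorem exists_valuation_le_subset {N : Set F} (hN : N ∈ 𝓝 (0 : F)) :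
    ∃ c : F, c ≠ 0 ∧ {x | valuation F x ≤ valuation F c} ⊆ N := by
  obtain ⟨r, hr, hrs⟩ := (IsValuativeTopology.hasBasis_nhds_zero' F).mem_iff.mp hN
  obtain ⟨r', hr', hr1⟩ := Valuation.IsNontrivial.exists_lt_one (v := valuation F)
  obtain ⟨r, rfl⟩ := ValuativeRel.valuation_surjective r
  have hr0 : r ≠ 0 := by simpa using hr
  have hr0' : r' ≠ 0 := by simpa using hr'
  refine ⟨r * r', mul_ne_zero hr0 hr0', fun x hx => hrs ?_⟩
  simp only [Set.mem_ofPred_eq] at hx ⊢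
  refine lt_of_le_of_lt hx ?_
  rw [map_mul]
  exact mul_lt_of_lt_one_right (zero_lt_iff.2 hr) hr1

theorem exists_common_le (s : Finset F) : ∃ c : F, c ≠ 0 ∧
    ∀ d ∈ s, d ≠ 0 → valuation F c ≤ valuation F d := by
  classical
  induction s using Finset.induction_on with
  | empty => exact ⟨1, one_ne_zero, by simp⟩
  | insert a s ha ih =>
    obtain ⟨c, hc, h⟩ := ih
    by_cases ha0 : a = 0
    · exact ⟨c, hc, fun d hd hd0 => h d ((Finset.mem_insert.1 hd).resolve_left
        (fun e => hd0 (e.trans ha0))) hd0⟩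
    rcases le_total (valuation F c) (valuation F a) with hle | hle
    · exact ⟨c, hc, by simp only [Finset.mem_insert]; rintro d (rfl | hd) hd0; exacts [hle, h d hd hd0]⟩
    · exact ⟨a, ha0, by
        simp only [Finset.mem_insert]; rintro d (rfl | hd) hd0; exacts [le_rfl, hle.trans (h d hd hd0)]⟩

theorem exists_ball_subset [Finite ι] {N : Set (ι → F)} (hN : N ∈ 𝓝 0) :
    ∃ c : F, c ≠ 0 ∧ (ball ι c : Set (ι → F)) ⊆ N := by
  classical
  cases nonempty_fintype ι
  rw [nhds_pi, Filter.mem_pi] at hN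
  obtain ⟨I, -, t, ht, htN⟩ := hN
  choose c hc hct using fun i => exists_valuation_le_subset (ht i)
  obtain ⟨d, hd, h⟩ := exists_common_le (Finset.univ.image c)
  exact ⟨d, hd, fun x hx => htN fun i _ => hct i ((hx i).trans
    (h _ (Finset.mem_image_of_mem c (Finset.mem_univ i)) (hc i)))⟩

theorem exists_common_ge (s : Finset F) : ∃ c : F, c ≠ 0 ∧
    ∀ d ∈ s, valuation F d ≤ valuation F c := by
  classical
  induction s using Finset.induction_on with
  | empty => exact ⟨1, one_ne_zero, by simp⟩
  | insert a s ha ih =>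
    obtain ⟨c, hc, h⟩ := ih
    rcases le_total (valuation F a) (valuation F c) with hle | hle
    · exact ⟨c, hc, by simpa using ⟨hle, h⟩⟩
    · refine ⟨a, fun h0 => ?_, by simpa using fun d hd => (h d hd).trans hle⟩
      rw [h0, map_zero, le_zero_iff, map_eq_zero] at hle
      exact hc hle

theorem exists_mem_ball [Finite ι] (x : ι → F) : ∃ c : F, c ≠ 0 ∧ x ∈ ball ι c := by
  classical
  cases nonempty_fintype ι
  obtain ⟨c, hc, h⟩ := exists_common_ge (Finset.univ.image x)
  exact ⟨c, hc, fun i => h _ (Finset.mem_image_of_mem x (Finset.mem_univ i))⟩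

/-- A nontrivial locally constant additive character of `F` has a conductor. -/
theorem exists_conductor {θ : AddChar F ℂ} (hθ : θ ≠ 1) (hker : {t | θ t = 1} ∈ 𝓝 (0 : F)) :
    ∃ a : F, a ≠ 0 ∧ ∀ z : F, (∀ t, valuation F t ≤ 1 → θ (z * t) = 1) ↔
      valuation F z ≤ valuation F a := by
  let I : AddSubgroup F :=
    { carrier := {z | ∀ t, valuation F t ≤ 1 → θ (z * t) = 1}
      zero_mem' := fun t _ => by simp
      add_mem' := fun hx hy t ht => by rw [add_mul, AddChar.map_add_eq_mul, hx t ht, hy t ht, one_mul]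
      neg_mem' := fun hx t ht => by
        rw [neg_mul, AddChar.map_neg_eq_inv, hx t ht, inv_one] }
  have hI : ∀ z ∈ I, ∀ z', valuation F z' ≤ valuation F z → z' ∈ I := by
    intro z hz z' h t ht
    rcases eq_or_ne z 0 with rfl | hz0
    · rw [map_zero, le_zero_iff, map_eq_zero] at h
      simp [h]
    have := hz (z' / z * t) (by
      rw [map_mul, map_div₀]
      exact mul_le_one' (div_le_one_of_le₀ h zero_le) ht)
    rwa [← mul_assoc, mul_div_cancel₀ _ hz0] at this
  obtain ⟨d, hd, hdI⟩ := exists_valuation_le_subset hker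
  have hdI' : d ∈ I := fun t ht => hdI (by
    simp only [Set.mem_ofPred_eq, map_mul]; exact mul_le_of_le_one_right' ht)
  have hopen : IsOpen (I : Set F) :=
    I.isOpen_of_mem_nhds (Filter.mem_of_superset (valuation_le_mem_nhds hd)
      fun x hx => hI d hdI' x hx)
  obtain ⟨t₁, ht₁⟩ : ∃ t, θ t ≠ 1 := by
    by_contra! h
    exact hθ (by ext t; simp [h t])
  have hcomp : IsCompact (I : Set F) := by
    refine (IsNonarchimedeanLocalField.isCompact_closedBall F (valuation F t₁)).of_isClosed_subset
      (I.isClosed_of_isOpen hopen) fun z hz => ?_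
    by_contra hlt
    simp only [Set.mem_ofPred_eq, not_le] at hlt
    exact ht₁ (by simpa using hI z hz t₁ hlt.le 1 (by simp))
  obtain ⟨s, hs⟩ := hcomp.elim_finite_subcover
    (fun w : {w : I // (w : F) ≠ 0} => {z | valuation F z ≤ valuation F ((w : I) : F)})
    (fun w => by
      have := isOpen_ball (ι := Unit) w.2
      have h2 := this.preimage (continuous_pi fun _ : Unit => continuous_id (X := F))
      convert h2 using 1
      ext z
      simp [mem_ball])
    (fun z hz => by
      rw [Set.mem_iUnion]
      by_cases hz0 : z = 0
      · exact ⟨⟨⟨d, hdI'⟩, hd⟩, by simp [hz0]⟩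
      · exact ⟨⟨⟨z, hz⟩, hz0⟩, by simp⟩)
  classical
  have key : ∀ s : Finset {w : I // (w : F) ≠ 0}, ∃ a ∈ I, a ≠ 0 ∧ ∀ w ∈ s,
      valuation F ((w : I) : F) ≤ valuation F a := by
    intro s
    induction s using Finset.induction_on with
    | empty => exact ⟨d, hdI', hd, by simp⟩
    | insert b s hb ih =>
      obtain ⟨a, ha, ha0, h⟩ := ih
      rcases le_total (valuation F ((b : I) : F)) (valuation F a) with hle | hle
      · exact ⟨a, ha, ha0, fun w hw => by
          rcases Finset.mem_insert.1 hw with rfl | hw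
          exacts [hle, h w hw]⟩
      · exact ⟨_, b.1.2, b.2, fun w hw => by
          rcases Finset.mem_insert.1 hw with rfl | hw
          exacts [le_rfl, (h w hw).trans hle]⟩
  obtain ⟨a, ha, ha0, h⟩ := key s
  refine ⟨a, ha0, fun z => ⟨fun hz => ?_, fun hz => hI a ha z hz⟩⟩
  have := hs hz
  simp only [Set.mem_iUnion] at this
  obtain ⟨w, hw, hzw⟩ := this
  exact le_trans hzw (h w hw)

theorem forall_ball_iff [Fintype ι] {θ : AddChar F ℂ} {a : F}
    (ha : ∀ z : F, (∀ t, valuation F t ≤ 1 → θ (z * t) = 1) ↔ valuation F z ≤ valuation F a) {c : F} (hc : c ≠ 0) (y : ι → F) :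
    (∀ x ∈ ball ι c, θ (x ⬝ᵥ y) = 1) ↔ y ∈ ball ι (a / c) := by
  classical
  constructor
  · intro h i
    rw [map_div₀, le_div_iff₀ (by simpa [zero_lt_iff] using hc), mul_comm, ← map_mul, ← ha]
    intro t ht
    have := h (Pi.single i (c * t)) fun j => by
      rcases eq_or_ne j i with rfl | hj
      · simpa using mul_le_of_le_one_right' ht
      · simp [Pi.single_eq_of_ne hj]
    rwa [single_dotProduct, mul_right_comm] at this
  · intro h x hx
    refine Finset.sum_induction _ (fun t => θ t = 1)
      (fun s t hs ht => by rw [AddChar.map_add_eq_mul, hs, ht, one_mul]) (by simp) fun i _ => ?_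
    have h1 : valuation F (c * y i) ≤ valuation F a := by
      have := h i
      rwa [map_div₀, le_div_iff₀ (by simpa [zero_lt_iff] using hc), mul_comm, ← map_mul] at this
    have := (ha _).2 h1 (x i / c) (by
      rw [map_div₀]; exact div_le_one_of_le₀ (hx i) zero_le)
    rwa [mul_right_comm, mul_div_cancel₀ _ hc] at this

theorem forall_ball_iff' [Fintype ι] {θ : AddChar F ℂ} {a : F}
    (ha : ∀ z : F, (∀ t, valuation F t ≤ 1 → θ (z * t) = 1) ↔ valuation F z ≤ valuation F a) {c : F} (ha0 : a ≠ 0) (hc : c ≠ 0) (x : ι → F) :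
    (∀ y ∈ ball ι (a / c), θ (x ⬝ᵥ y) = 1) ↔ x ∈ ball ι c := by
  have := forall_ball_iff ha (div_ne_zero ha0 hc) x
  rw [div_div_cancel₀ ha0] at this
  simpa only [dotProduct_comm] using this

end Lattice

end Kudla

namespace Kudla

open ValuativeRel Topology Matrix

set_option linter.unusedSectionVars false

/-! ### Finite systems of coset representatives -/

section Reps

variable {G M : Type*} [AddCommGroup G] [AddCommMonoid M]

/-- `R` is a system of representatives of the cosets of `H₀` in `H`. -/
structure IsReps (R : Finset G) (H₀ H : AddSubgroup G) : Prop where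
  mem : ∀ r ∈ R, r ∈ H
  exists_rep : ∀ g ∈ H, ∃ r ∈ R, g - r ∈ H₀
  unique : ∀ r ∈ R, ∀ r' ∈ R, r - r' ∈ H₀ → r = r'

theorem IsReps.sum_shift {R : Finset G} {H₀ H : AddSubgroup G} (hR : IsReps R H₀ H) (f : G → M)
    (hf : ∀ g ∈ H, ∀ k ∈ H₀, f (g + k) = f g) {h : G} (hh : h ∈ H) :
    ∑ r ∈ R, f (h + r) = ∑ r ∈ R, f r := by
  choose! τ hτ hτ' using hR.exists_rep
  have hf' : ∀ g ∈ H, f g = f (τ g) := fun g hg => by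
    have := hf (τ g) (hR.mem _ (hτ g hg)) _ (hτ' g hg)
    rwa [add_sub_cancel] at this
  refine Finset.sum_nbij (fun r => τ (h + r)) (fun r hr => hτ _ (H.add_mem hh (hR.mem r hr))) ?_ ?_
    fun r hr => hf' _ (H.add_mem hh (hR.mem r hr))
  · intro r hr r' hr' hrr
    refine hR.unique r hr r' hr' ?_
    have h1 := hτ' _ (H.add_mem hh (hR.mem r hr))
    have h2 := hτ' _ (H.add_mem hh (hR.mem r' hr'))
    have h3 := H₀.sub_mem h1 h2
    rw [show τ (h + r) = τ (h + r') from hrr] at h3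
    convert h3 using 1
    abel
  · intro r' hr'
    have hr'' := H.sub_mem (hR.mem r' hr') hh
    refine ⟨τ (r' - h), hτ _ hr'', ?_⟩
    have h4 := H.add_mem hh (hR.mem _ (hτ _ hr''))
    refine hR.unique _ (hτ _ h4) _ hr' ?_
    have h1 := hτ' _ h4
    have h2 := hτ' _ hr''
    have h3 := H₀.neg_mem (H₀.add_mem h1 h2)
    convert h3 using 1
    abel

theorem IsReps.sum_char {R : Finset G} {H₀ H : AddSubgroup G} (hR : IsReps R H₀ H) {f : G → ℂ}
    (hf : ∀ g g', f (g + g') = f g * f g') (h0 : ∀ k ∈ H₀, f k = 1) {h : G} (hh : h ∈ H)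
    (h1 : f h ≠ 1) : ∑ r ∈ R, f r = 0 := by
  have := hR.sum_shift f (fun g _ k hk => by rw [hf, h0 k hk, mul_one]) hh
  simp only [hf, ← Finset.mul_sum] at this
  by_contra hne
  exact h1 (mul_right_cancel₀ hne (this.trans (one_mul _).symm))

theorem IsReps.nonempty {R : Finset G} {H₀ H : AddSubgroup G} (hR : IsReps R H₀ H) :
    R.Nonempty := by
  obtain ⟨r, hr, -⟩ := hR.exists_rep 0 H.zero_mem
  exact ⟨r, hr⟩

theorem exists_isReps (H₀ H : AddSubgroup G) [Finite (H ⧸ H₀.addSubgroupOf H)] :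
    ∃ R : Finset G, IsReps R H₀ H := by
  classical
  cases nonempty_fintype (H ⧸ H₀.addSubgroupOf H)
  refine ⟨Finset.univ.image fun q : H ⧸ H₀.addSubgroupOf H => (q.out : G), ?_, ?_, ?_⟩
  · simp
  · intro g hg
    refine ⟨_, Finset.mem_image_of_mem _
      (Finset.mem_univ (QuotientAddGroup.mk (s := H₀.addSubgroupOf H) (⟨g, hg⟩ : H))), ?_⟩
    have := (QuotientAddGroup.eq (s := H₀.addSubgroupOf H)).1 (Quotient.out_eq
      (QuotientAddGroup.mk (s := H₀.addSubgroupOf H) (⟨g, hg⟩ : H)))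
    rw [AddSubgroup.mem_addSubgroupOf] at this
    simpa [sub_eq_neg_add] using this
  · simp only [Finset.mem_image, Finset.mem_univ, true_and]
    rintro _ ⟨q, rfl⟩ _ ⟨q', rfl⟩ h
    congr 2
    rw [← Quotient.out_eq q', ← Quotient.out_eq q]
    refine ((QuotientAddGroup.eq (s := H₀.addSubgroupOf H)).2 ?_).symm
    rw [AddSubgroup.mem_addSubgroupOf]
    simpa [sub_eq_neg_add] using h

theorem exists_isReps_ball {F : Type*} [Field F] [ValuativeRel F] [TopologicalSpace F]
    [IsNonarchimedeanLocalField F] {ι : Type*} [Finite ι] {c : F} (hc : c ≠ 0) (d : F) :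
    ∃ R : Finset (ι → F), IsReps R (ball ι c) (ball ι d) := by
  have : CompactSpace (ball ι d) := isCompact_iff_compactSpace.1 (isCompact_ball d)
  have : Finite (ball ι d ⧸ (ball ι c).addSubgroupOf (ball ι d)) :=
    AddSubgroup.quotient_finite_of_isOpen _
      ((isOpen_ball hc).preimage continuous_subtype_val)
  exact exists_isReps _ _

end Reps

/-! ### Representations of the Heisenberg group -/

section Weyl

variable {F W S : Type*} [Field F] [CharZero F] [ValuativeRel F] [TopologicalSpace F]
  [IsNonarchimedeanLocalField F] [AddCommGroup W] [Module F W] [TopologicalSpace W]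
  [IsModuleTopology F W] [AddCommGroup S] [Module ℂ S]

theorem addChar_ne_zero (χ : AddChar F ℂ) (t : F) : χ t ≠ 0 := fun h => by
  have := χ.map_add_eq_mul t (-t)
  rw [h, zero_mul, add_neg_cancel, AddChar.map_zero_eq_one] at this
  exact one_ne_zero this

/-- `ρ` is a smooth irreducible projective representation of `W`, coming from a representation of
the Heisenberg group with central character `χ`. -/
structure IsWeylSystem (χ : AddChar F ℂ) (B : W →ₗ[F] W →ₗ[F] F) (ρ : W → Module.End ℂ S) :
    Prop where
  ne_one : χ ≠ 1
  skew : ∀ w w', B w w' = -B w' w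
  nontrivial : Nontrivial S
  map_zero : ρ 0 = 1
  map_mul : ∀ w w' φ, ρ w (ρ w' φ) = χ (B w w') • ρ (w + w') φ
  irreducible : ∀ N : Submodule ℂ S, (∀ w, ∀ φ ∈ N, ρ w φ ∈ N) → N = ⊥ ∨ N = ⊤
  smooth : ∀ φ, {w | ρ w φ = φ} ∈ 𝓝 (0 : W)
  ker_mem_nhds : {t | χ t = 1} ∈ 𝓝 (0 : F)

/-- Linear coordinates adapted to a Lagrangian subspace `L`. -/
structure Frame (B : W →ₗ[F] W →ₗ[F] F) (L : Submodule F W) (ι : Type*) [Fintype ι] where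
  e : (ι → F) →ₗ[F] W
  y : W →ₗ[F] (ι → F)
  s : (ι → F) →ₗ[F] W
  form_e : ∀ x w, B (e x) w = x ⬝ᵥ y w
  y_s : ∀ t, y (s t) = t
  mem_iff : ∀ w, w ∈ L ↔ y w = 0
  mem_iff_range : ∀ w, w ∈ L ↔ ∃ x, e x = w

/-- `l` is invariant under the operators attached to elements of `L`. -/
def IsInvariantUnder (ρ : W → Module.End ℂ S) (L : Submodule F W) (l : Module.Dual ℂ S) : Prop :=
  ∀ w ∈ L, ∀ φ, l (ρ w φ) = l φ

variable {χ : AddChar F ℂ} {B : W →ₗ[F] W →ₗ[F] F} {ρ : W → Module.End ℂ S}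

namespace IsWeylSystem

theorem comm (hρ : IsWeylSystem χ B ρ) (w w' : W) (φ : S) :
    ρ w (ρ w' φ) = (χ * χ) (B w w') • ρ w' (ρ w φ) := by
  rw [hρ.map_mul, hρ.map_mul, hρ.skew w' w, AddChar.mul_apply, smul_smul, add_comm w' w,
    AddChar.map_neg_eq_inv, mul_assoc, mul_inv_cancel₀ (addChar_ne_zero χ _), mul_one]

theorem ne_zero_of_injective (hρ : IsWeylSystem χ B ρ) (w : W) {φ : S} (h : ρ w φ = 0) :
    φ = 0 := by
  have h1 := hρ.map_mul (-w) w φ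
  rw [h, _root_.map_zero, neg_add_cancel, hρ.map_zero, Module.End.one_apply] at h1
  exact (smul_eq_zero.1 h1.symm).resolve_left (addChar_ne_zero χ _)

theorem eventually_fixed (hρ : IsWeylSystem χ B ρ) {ι : Type*} [Finite ι]
    (f : (ι → F) →ₗ[F] W) (φ : S) : ∃ c : F, c ≠ 0 ∧ ∀ x ∈ ball ι c, ρ (f x) φ = φ := by
  have := IsModuleTopology.toContinuousAdd F W
  have hf : Continuous f := IsModuleTopology.continuous_of_linearMap f
  have h := hf.tendsto 0
  rw [_root_.map_zero] at h
  obtain ⟨c, hc, hcs⟩ := exists_ball_subset (h (hρ.smooth φ))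
  exact ⟨c, hc, fun x hx => hcs hx⟩

theorem exists_conductor (hρ : IsWeylSystem χ B ρ) :
    ∃ a : F, a ≠ 0 ∧ ∀ z : F, (∀ t, valuation F t ≤ 1 → (χ * χ) (z * t) = 1) ↔
      valuation F z ≤ valuation F a := by
  refine Kudla.exists_conductor (fun h => hρ.ne_one ?_) ?_
  · ext t
    have := DFunLike.congr_fun h (t / 2)
    rwa [AddChar.mul_apply, ← AddChar.map_add_eq_mul, add_halves] at this
  · filter_upwards [hρ.ker_mem_nhds] with t ht
    simp [AddChar.mul_apply, ht]

variable {L : Submodule F W} {ι : Type*} [Fintype ι]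

theorem frame_isotropic (f : Frame B L ι) {w w' : W} (hw : w ∈ L) (hw' : w' ∈ L) : B w w' = 0 := by
  obtain ⟨x, rfl⟩ := (f.mem_iff_range w).1 hw
  rw [f.form_e, (f.mem_iff w').1 hw', dotProduct_zero]

theorem frame_e_mem (f : Frame B L ι) (x : ι → F) : f.e x ∈ L := (f.mem_iff_range _).2 ⟨x, rfl⟩

theorem frame_add (hρ : IsWeylSystem χ B ρ) (f : Frame B L ι) (x x' : ι → F) (φ : S) :
    ρ (f.e x) (ρ (f.e x') φ) = ρ (f.e (x + x')) φ := by
  rw [hρ.map_mul, frame_isotropic f (frame_e_mem f x) (frame_e_mem f x'), AddChar.map_zero_eq_one,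
    one_smul, _root_.map_add]

theorem frame_comm (hρ : IsWeylSystem χ B ρ) (f : Frame B L ι) (x : ι → F) (w : W) (φ : S) :
    ρ (f.e x) (ρ w φ) = (χ * χ) (x ⬝ᵥ f.y w) • ρ w (ρ (f.e x) φ) := by
  rw [hρ.comm, f.form_e]

variable {l : Module.Dual ℂ S}

theorem functional_comm (hρ : IsWeylSystem χ B ρ) (f : Frame B L ι) (hl : IsInvariantUnder ρ L l)
    (x : ι → F) (w : W) (φ : S) :
    l (ρ w φ) = (χ * χ) (x ⬝ᵥ f.y w) * l (ρ w (ρ (f.e x) φ)) := by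
  rw [← hl _ (frame_e_mem f x) (ρ w φ), frame_comm hρ, map_smul, smul_eq_mul]

/-- The functions `w ↦ l (ρ w φ)` have compact support modulo `L`. -/
theorem support (hρ : IsWeylSystem χ B ρ) (f : Frame B L ι) (hl : IsInvariantUnder ρ L l) {a c : F}
    (ha : ∀ z : F, (∀ t, valuation F t ≤ 1 → (χ * χ) (z * t) = 1) ↔ valuation F z ≤ valuation F a)
    (hc : c ≠ 0) {φ : S} (hφ : ∀ x ∈ ball ι c, ρ (f.e x) φ = φ) {w : W} (hw : l (ρ w φ) ≠ 0) :
    f.y w ∈ ball ι (a / c) := by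
  rw [← forall_ball_iff ha hc]
  intro x hx
  have := functional_comm hρ f hl x w φ
  rw [hφ x hx] at this
  exact mul_right_cancel₀ hw (this.symm.trans (one_mul _).symm)

theorem exists_average (hρ : IsWeylSystem χ B ρ) (f : Frame B L ι) {a c d : F}
    (ha : ∀ z : F, (∀ t, valuation F t ≤ 1 → (χ * χ) (z * t) = 1) ↔ valuation F z ≤ valuation F a)
    (hc : c ≠ 0) (hd : d ≠ 0) {φ : S} (hφ : ∀ x ∈ ball ι c, ρ (f.e x) φ = φ) :
    ∃ (n : ℕ) (φ' : S), n ≠ 0 ∧ ∀ l, IsInvariantUnder ρ L l →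
      l φ' = n * l φ ∧
      (∀ w, f.y w ∈ ball ι (a / d) → l (ρ w φ') = n * l (ρ w φ)) ∧
      ∀ w, f.y w ∉ ball ι (a / d) → l (ρ w φ') = 0 := by
  obtain ⟨R, hR⟩ := exists_isReps_ball (ι := ι) hc d
  refine ⟨R.card, ∑ r ∈ R, ρ (f.e r) φ, hR.nonempty.card_pos.ne', fun l hl => ⟨?_, ?_, ?_⟩⟩
  · rw [map_sum, Finset.sum_congr rfl fun r _ => hl _ (frame_e_mem f r) φ, Finset.sum_const,
      nsmul_eq_mul]
  · intro w hw
    rw [map_sum, map_sum, ← nsmul_eq_mul, ← Finset.sum_const]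
    refine Finset.sum_congr rfl fun r hr => ?_
    rw [functional_comm hρ f hl r w φ, (forall_ball_iff ha hd _).2 hw r (hR.mem r hr), one_mul]
  · intro w hw
    rw [map_sum, map_sum]
    have h1 : ∀ r, l (ρ w (ρ (f.e r) φ)) = (χ * χ) ((-r) ⬝ᵥ f.y w) * l (ρ w φ) := fun r => by
      rw [functional_comm hρ f hl r w φ, ← mul_assoc, ← AddChar.map_add_eq_mul, ← add_dotProduct,
        neg_add_cancel, zero_dotProduct, AddChar.map_zero_eq_one, one_mul]
    simp only [h1, ← Finset.sum_mul]
    by_cases h0 : l (ρ w φ) = 0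
    · rw [h0, mul_zero]
    have h2 := support hρ f hl ha hc hφ h0
    rw [← forall_ball_iff ha hd] at hw
    push Not at hw
    obtain ⟨x, hx, hx1⟩ := hw
    rw [hR.sum_char (f := fun r => (χ * χ) ((-r) ⬝ᵥ f.y w)) (h := -x), zero_mul]
    · intro g g'
      rw [neg_add, add_dotProduct, AddChar.map_add_eq_mul]
    · intro k hk
      exact (forall_ball_iff ha hc _).2 h2 _ ((ball ι c).neg_mem hk)
    · exact (ball ι d).neg_mem hx
    · rwa [neg_neg]

theorem eq_zero_of_forall (hρ : IsWeylSystem χ B ρ) (hl0 : l ≠ 0) {φ : S}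
    (h : ∀ w, l (ρ w φ) = 0) : φ = 0 := by
  let N : Submodule ℂ S :=
    { carrier := {φ | ∀ w, l (ρ w φ) = 0}
      zero_mem' := fun w => by simp
      add_mem' := fun ha hb w => by rw [_root_.map_add, _root_.map_add, ha w, hb w, add_zero]
      smul_mem' := fun c φ hφ w => by rw [map_smul, map_smul, hφ w, smul_zero] }
  have hN : ∀ w, ∀ φ ∈ N, ρ w φ ∈ N := fun w φ hφ w' => by
    rw [hρ.map_mul, map_smul, hφ, smul_zero]
  rcases hρ.irreducible N hN with h1 | h1
  · have : φ ∈ N := h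
    rwa [h1, Submodule.mem_bot] at this
  · refine absurd ?_ hl0
    ext φ
    have : φ ∈ N := h1 ▸ Submodule.mem_top
    have := this 0
    rwa [hρ.map_zero] at this

theorem functional_section (hρ : IsWeylSystem χ B ρ) (f : Frame B L ι)
    (hl : IsInvariantUnder ρ L l) (w : W) (φ : S) :
    l (ρ (f.s (f.y w)) φ) = χ (B (w - f.s (f.y w)) (f.s (f.y w))) * l (ρ w φ) := by
  have hm : w - f.s (f.y w) ∈ L := by rw [f.mem_iff, map_sub, f.y_s, sub_self]
  rw [← hl _ hm, hρ.map_mul, sub_add_cancel, map_smul, smul_eq_mul]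

/-- Functionals invariant under a Lagrangian subspace are unique up to scalars. -/
theorem functional_unique (hρ : IsWeylSystem χ B ρ) (f : Frame B L ι) {l l' : Module.Dual ℂ S}
    (hl0 : l ≠ 0) (hl : IsInvariantUnder ρ L l) (hl' : IsInvariantUnder ρ L l') :
    ∃ c : ℂ, l' = c • l := by
  suffices h : LinearMap.ker l ≤ LinearMap.ker l' by
    obtain ⟨g, hg⟩ := LinearMap.exists_extend ((LinearMap.ker l).liftQ l' h ∘ₗ
      (l.quotKerEquivRange.symm.toLinearMap))
    refine ⟨g 1, ?_⟩
    ext φ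
    have := LinearMap.congr_fun hg ⟨l φ, LinearMap.mem_range_self l φ⟩
    simp only [LinearMap.comp_apply, Submodule.subtype_apply, LinearEquiv.coe_coe] at this
    have h2 : l.quotKerEquivRange.symm ⟨l φ, LinearMap.mem_range_self l φ⟩
        = Submodule.Quotient.mk φ := by
      rw [LinearEquiv.symm_apply_eq]
      rfl
    rw [h2, Submodule.liftQ_apply] at this
    rw [← this, LinearMap.smul_apply, smul_eq_mul, mul_comm, ← smul_eq_mul, ← map_smul, smul_eq_mul,
      mul_one]
  intro φ hφ
  rw [LinearMap.mem_ker] at hφ ⊢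
  obtain ⟨a, ha0, ha⟩ := hρ.exists_conductor
  obtain ⟨c, hc, hcφ⟩ := hρ.eventually_fixed f.e φ
  obtain ⟨c₁, hc₁, hcφ₁⟩ := hρ.eventually_fixed f.s φ
  obtain ⟨n, φ', hn, h⟩ := hρ.exists_average f ha hc (div_ne_zero ha0 hc₁) hcφ
  have hφ' : φ' = 0 := by
    refine hρ.eq_zero_of_forall hl0 fun w => ?_
    obtain ⟨-, h1, h2⟩ := h l hl
    by_cases hw : f.y w ∈ ball ι (a / (a / c₁))
    · rw [h1 w hw]
      rw [div_div_cancel₀ ha0] at hw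
      have h3 := functional_section hρ f hl w φ
      rw [hcφ₁ _ hw, hφ, eq_comm, mul_eq_zero] at h3
      rw [h3.resolve_left (addChar_ne_zero χ _), mul_zero]
    · exact h2 w hw
  have h4 := (h l' hl').1
  rw [hφ', _root_.map_zero, eq_comm, mul_eq_zero] at h4
  exact h4.resolve_left (Nat.cast_ne_zero.2 hn)

/-- A Lagrangian subspace has a nonzero invariant functional. -/
theorem exists_functional (hρ : IsWeylSystem χ B ρ) (f : Frame B L ι) :
    ∃ l : Module.Dual ℂ S, l ≠ 0 ∧ IsInvariantUnder ρ L l := by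
  obtain ⟨a, ha0, ha⟩ := hρ.exists_conductor
  let N : Submodule ℂ S := Submodule.span ℂ {φ | ∃ w ∈ L, ∃ φ', φ = ρ w φ' - φ'}
  suffices hN : N ≠ ⊤ by
    obtain ⟨l, hl0, hl⟩ := Submodule.exists_le_ker_of_lt_top N (lt_top_iff_ne_top.2 hN)
    refine ⟨l, hl0, fun w hw φ => ?_⟩
    have : ρ w φ - φ ∈ LinearMap.ker l := hl (Submodule.subset_span ⟨w, hw, φ, rfl⟩)
    rwa [LinearMap.mem_ker, map_sub, sub_eq_zero] at this
  intro htop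
  have key : ∀ φ : S, ∃ c₀ d₀ : F, c₀ ≠ 0 ∧ d₀ ≠ 0 ∧ ∀ c d, valuation F c ≤ valuation F c₀ →
      valuation F d₀ ≤ valuation F d → ∀ R : Finset (ι → F), IsReps R (ball ι c) (ball ι d) →
      ∑ r ∈ R, ρ (f.e r) φ = 0 := by
    intro φ
    have hφ : φ ∈ N := htop ▸ Submodule.mem_top
    induction hφ using Submodule.span_induction with
    | mem φ h =>
      obtain ⟨w, hw, φ', rfl⟩ := h
      obtain ⟨x, rfl⟩ := (f.mem_iff_range w).1 hw
      obtain ⟨c, hc, hcφ⟩ := hρ.eventually_fixed f.e φ'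
      obtain ⟨d, hd, hxd⟩ := exists_mem_ball x
      refine ⟨c, d, hc, hd, fun c' d' hc' hd' R hR => ?_⟩
      simp only [map_sub, Finset.sum_sub_distrib, frame_add hρ f]
      rw [sub_eq_zero]
      simp only [add_comm _ x]
      refine hR.sum_shift (fun r => ρ (f.e r) φ') (fun g _ k hk => ?_) (ball_mono hd' hxd)
      rw [← frame_add hρ f, hcφ k (ball_mono hc' hk)]
    | zero => exact ⟨1, 1, one_ne_zero, one_ne_zero, by simp⟩
    | add φ₁ φ₂ _ _ h₁ h₂ =>
      obtain ⟨c₁, d₁, hc₁, hd₁, h₁⟩ := h₁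
      obtain ⟨c₂, d₂, hc₂, hd₂, h₂⟩ := h₂
      classical
      obtain ⟨c, hc, hcc⟩ := exists_common_le {c₁, c₂}
      obtain ⟨d, hd, hdd⟩ := exists_common_ge {d₁, d₂}
      refine ⟨c, d, hc, hd, fun c' d' hc' hd' R hR => ?_⟩
      simp only [_root_.map_add, Finset.sum_add_distrib]
      rw [h₁ c' d' (hc'.trans (hcc _ (by simp) hc₁)) ((hdd _ (by simp)).trans hd') R hR,
        h₂ c' d' (hc'.trans (hcc _ (by simp) hc₂)) ((hdd _ (by simp)).trans hd') R hR, add_zero]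
    | smul t φ _ h =>
      obtain ⟨c, d, hc, hd, h⟩ := h
      refine ⟨c, d, hc, hd, fun c' d' hc' hd' R hR => ?_⟩
      simp only [map_smul, ← Finset.smul_sum]
      rw [h c' d' hc' hd' R hR, smul_zero]
  have := hρ.nontrivial
  obtain ⟨φ, hφ0⟩ := exists_ne (0 : S)
  obtain ⟨c₁, hc₁, hcφ₁⟩ := hρ.eventually_fixed f.e φ
  obtain ⟨c₂, hc₂, hcφ₂⟩ := hρ.eventually_fixed f.s φ
  obtain ⟨Y, hY⟩ := exists_isReps_ball (ι := ι) hc₂ (a / c₁)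
  choose c₀ d₀ hc₀ hd₀ hcd using fun y : ι → F => key (ρ (f.s y) φ)
  classical
  obtain ⟨c, hc, hcc⟩ := exists_common_le (insert c₁ (Y.image c₀))
  obtain ⟨d, hd, hdd⟩ := exists_common_ge (insert c₁ (Y.image d₀))
  obtain ⟨R, hR⟩ := exists_isReps_ball (ι := ι) hc d
  have hcc₁ : valuation F c ≤ valuation F c₁ := hcc _ (by simp) hc₁
  have hc₁d : valuation F c₁ ≤ valuation F d := hdd _ (by simp)
  -- the components of `φ` with respect to all characters of the lattice vanish
  have hvan : ∀ y ∈ ball ι (a / c), ∑ r ∈ R, (χ * χ) (r ⬝ᵥ y) • ρ (f.e r) φ = 0 := by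
    intro y hy
    apply hρ.ne_zero_of_injective (f.s y)
    have h1 : ∀ r, ρ (f.e r) (ρ (f.s y) φ) = (χ * χ) (r ⬝ᵥ y) • ρ (f.s y) (ρ (f.e r) φ) :=
      fun r => by rw [frame_comm hρ f, f.y_s]
    rw [map_sum]
    simp only [map_smul, ← h1]
    by_cases hy1 : y ∈ ball ι (a / c₁)
    · obtain ⟨y₀, hy₀, hyy⟩ := hY.exists_rep y hy1
      have h2 := hρ.map_mul (f.s y₀) (f.s (y - y₀)) φ
      rw [hcφ₂ _ hyy, ← _root_.map_add, add_sub_cancel] at h2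
      have h3 := hcd y₀ c d (hcc _ (by simp only [Finset.mem_insert, Finset.mem_image]
                                       exact Or.inr ⟨y₀, hy₀, rfl⟩) (hc₀ y₀))
        (hdd _ (by simp only [Finset.mem_insert, Finset.mem_image]
                   exact Or.inr ⟨y₀, hy₀, rfl⟩)) R hR
      simp only [h2, map_smul, ← Finset.smul_sum] at h3
      exact (smul_eq_zero.1 h3).resolve_left (addChar_ne_zero χ _)
    · rw [← forall_ball_iff ha hc₁] at hy1
      push Not at hy1
      obtain ⟨x, hx, hx1⟩ := hy1
      have hxd : x ∈ ball ι d := ball_mono hc₁d hx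
      have h4 := hR.sum_shift (fun r => ρ (f.e r) (ρ (f.s y) φ)) (fun g _ k hk => by
        rw [← frame_add hρ f, h1 k, hcφ₁ k (ball_mono hcc₁ hk),
            (forall_ball_iff ha hc _).2 hy k hk, one_smul]) hxd
      have h5 : ∀ r, ρ (f.e (x + r)) (ρ (f.s y) φ)
          = (χ * χ) (x ⬝ᵥ y) • ρ (f.e r) (ρ (f.s y) φ) := fun r => by
        rw [add_comm, ← frame_add hρ f, h1 x, map_smul, hcφ₁ x hx]
      simp only [h5, ← Finset.smul_sum] at h4
      have h6 : ((χ * χ) (x ⬝ᵥ y) - 1) • ∑ r ∈ R, ρ (f.e r) (ρ (f.s y) φ) = 0 := by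
        rw [sub_smul, one_smul, h4, sub_self]
      exact (smul_eq_zero.1 h6).resolve_left (sub_ne_zero.2 hx1)
  obtain ⟨Y', hY'⟩ := exists_isReps_ball (ι := ι) (div_ne_zero ha0 hd) (a / c)
  have hsum : ∑ y ∈ Y', ∑ r ∈ R, (χ * χ) (r ⬝ᵥ y) • ρ (f.e r) φ = 0 :=
    Finset.sum_eq_zero fun y hy => hvan y (hY'.mem y hy)
  rw [Finset.sum_comm] at hsum
  simp only [← Finset.sum_smul] at hsum
  obtain ⟨r₀, hr₀, hr₀c⟩ := hR.exists_rep 0 (ball ι d).zero_mem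
  have hr₀c' : r₀ ∈ ball ι c := by simpa using (ball ι c).neg_mem hr₀c
  rw [Finset.sum_eq_single r₀] at hsum
  · rw [hcφ₁ r₀ (ball_mono hcc₁ hr₀c'), Finset.sum_congr rfl fun y hy =>
      (forall_ball_iff ha hc _).2 (hY'.mem y hy) r₀ hr₀c'] at hsum
    rw [Finset.sum_const, nsmul_one] at hsum
    exact hφ0 ((smul_eq_zero.1 hsum).resolve_left (Nat.cast_ne_zero.2 hY'.nonempty.card_pos.ne'))
  · intro r hr hrr
    have hrc : r ∉ ball ι c := fun h => hrr (hR.unique r hr r₀ hr₀ ((ball ι c).sub_mem h hr₀c'))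
    rw [← forall_ball_iff' ha ha0 hc] at hrc
    push Not at hrc
    obtain ⟨y, hy, hy1⟩ := hrc
    rw [hY'.sum_char (f := fun y => (χ * χ) (r ⬝ᵥ y)) (h := y), zero_smul]
    · intro g g'
      rw [dotProduct_add, AddChar.map_add_eq_mul]
    · intro k hk
      exact (forall_ball_iff ha hd _).2 hk r (hR.mem r hr)
    · exact hy
    · exact hy1
  · exact fun h => absurd hr₀ h

end IsWeylSystem

end Weyl

end Kudla

namespace Kudla

open ValuativeRel Topology Matrix MeasureTheory Measure
open scoped NNReal ENNReal Pointwise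

set_option linter.overlappingInstances false

set_option linter.unusedSectionVars false

section NormalizedAbs

variable {E : Type*} [Field E] [TopologicalSpace E] [IsTopologicalRing E] [LocallyCompactSpace E]

theorem normalizedAbs_of_ne_zero {x : E} (hx : x ≠ 0) :
    normalizedAbs x = (distribHaarChar E (Units.mk0 x hx) : ℝ≥0) := by
  rw [normalizedAbs, dif_neg hx]

theorem normalizedAbs_zero : normalizedAbs (0 : E) = 0 := by
  rw [normalizedAbs, dif_pos rfl]

theorem normalizedAbs_nonneg (x : E) : 0 ≤ normalizedAbs x := by
  rcases eq_or_ne x 0 with rfl | hx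
  · rw [normalizedAbs_zero]
  · rw [normalizedAbs_of_ne_zero hx]
    exact NNReal.coe_nonneg _

theorem normalizedAbs_pos {x : E} (hx : x ≠ 0) : 0 < normalizedAbs x := by
  rw [normalizedAbs_of_ne_zero hx]
  exact NNReal.coe_pos.2 distribHaarChar_pos

theorem normalizedAbs_mul (x y : E) : normalizedAbs (x * y) = normalizedAbs x * normalizedAbs y := by
  rcases eq_or_ne x 0 with rfl | hx
  · rw [zero_mul, normalizedAbs_zero, zero_mul]
  rcases eq_or_ne y 0 with rfl | hy
  · rw [mul_zero, normalizedAbs_zero, mul_zero]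
  rw [normalizedAbs_of_ne_zero hx, normalizedAbs_of_ne_zero hy,
    normalizedAbs_of_ne_zero (mul_ne_zero hx hy), Units.mk0_mul, map_mul, NNReal.coe_mul]

theorem normalizedAbs_one : normalizedAbs (1 : E) = 1 := by
  rw [normalizedAbs_of_ne_zero one_ne_zero, Units.mk0_one, map_one, NNReal.coe_one]

/-- The normalized absolute value as a homomorphism. -/
noncomputable def normalizedAbsHom (E : Type*) [Field E] [TopologicalSpace E] [IsTopologicalRing E]
    [LocallyCompactSpace E] : E →* ℝ where
  toFun := normalizedAbs
  map_one' := normalizedAbs_one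
  map_mul' := normalizedAbs_mul

theorem normalizedAbs_pow (x : E) (n : ℕ) : normalizedAbs (x ^ n) = normalizedAbs x ^ n :=
  map_pow (normalizedAbsHom E) x n

theorem normalizedAbs_prod {ι : Type*} (s : Finset ι) (f : ι → E) :
    normalizedAbs (∏ i ∈ s, f i) = ∏ i ∈ s, normalizedAbs (f i) :=
  map_prod (normalizedAbsHom E) f s

theorem addHaar_preimage_mul [MeasurableSpace E] [BorelSpace E] (μ : Measure E)
    [μ.IsAddHaarMeasure] [μ.Regular] {x : E} (hx : x ≠ 0) (s : Set E) :
    ENNReal.ofReal (normalizedAbs x) * μ ((x * ·) ⁻¹' s) = μ s := by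
  rw [normalizedAbs_of_ne_zero hx, ENNReal.ofReal_coe_nnreal, distribHaarChar_mul]
  congr 1
  ext z
  constructor
  · rintro ⟨y, hy, rfl⟩
    exact hy
  · intro hz
    exact ⟨x⁻¹ * z, by simpa [hx] using hz, by simp [Units.smul_def, hx]⟩

end NormalizedAbs

section Determinant

variable {F : Type*} [Field F] [ValuativeRel F] [TopologicalSpace F] [IsNonarchimedeanLocalField F]

theorem secondCountable_and_t2 (F : Type*) [Field F] [ValuativeRel F] [TopologicalSpace F]
    [IsNonarchimedeanLocalField F] : SecondCountableTopology F ∧ T2Space F := by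
  let := IsTopologicalAddGroup.rightUniformSpace F
  have := isUniformAddGroup_of_addCommGroup (G := F)
  let : (Valued.v (R := F)).RankOne :=
  { hom' := IsRankLeOne.nonempty.some.emb (R := F).comp MonoidWithZeroHom.ValueGroup₀.embedding
    strictMono' := IsRankLeOne.nonempty.some.strictMono.comp
        MonoidWithZeroHom.ValueGroup₀.embedding_strictMono }
  open scoped Valued in
  have : ProperSpace F := .of_nontriviallyNormedField_of_weaklyLocallyCompactSpace F
  open scoped Valued in
  exact ⟨secondCountable_of_proper, inferInstance⟩

theorem continuous_linear_pi {ι κ : Type*} [Finite ι] [Finite κ] (f : (ι → F) →ₗ[F] (κ → F)) : Continuous f :=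
  LinearMap.continuous_on_pi f

variable [SecondCountableTopology F] [MeasurableSpace F] [BorelSpace F] {ι : Type*} [Fintype ι]

theorem map_diagonal_pi [DecidableEq ι] (μ : Measure F) [μ.IsAddHaarMeasure] [μ.Regular]
    {D : ι → F} (hD : det (diagonal D) ≠ 0) :
    ENNReal.ofReal (normalizedAbs (det (diagonal D))) •
      Measure.map (toLin' (diagonal D)) (Measure.pi fun _ : ι => μ) = Measure.pi fun _ => μ := by
  refine (Measure.pi_eq fun s hs => ?_).symm
  simp only [det_diagonal] at hD ⊢
  rw [Measure.coe_smul, Pi.smul_apply, smul_eq_mul,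
    Measure.map_apply (continuous_linear_pi _).measurable
    (MeasurableSet.univ_pi hs)]
  have h1 : toLin' (diagonal D) ⁻¹' Set.univ.pi s
      = Set.univ.pi fun i => (D i * ·) ⁻¹' s i := by
    ext x
    simp only [Set.mem_preimage, Set.mem_univ_pi, toLin'_apply, mulVec_diagonal]
  have hD' : ∀ i, D i ≠ 0 := fun i => Finset.prod_ne_zero_iff.1 hD i (Finset.mem_univ i)
  rw [h1, Measure.pi_pi, normalizedAbs_prod,
    ENNReal.ofReal_prod_of_nonneg fun i _ => normalizedAbs_nonneg _, ← Finset.prod_mul_distrib]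
  exact Finset.prod_congr rfl fun i _ => addHaar_preimage_mul μ (hD' i) _

theorem measurePreserving_transvection [DecidableEq ι] (μ : Measure F) [μ.IsAddHaarMeasure]
    [SigmaFinite μ] (t : TransvectionStruct ι F) :
    Measure.map (toLin' t.toMatrix) (Measure.pi fun _ : ι => μ) = Measure.pi fun _ => μ := by
  have ht : Measurable (toLin' t.toMatrix) := (continuous_linear_pi _).measurable
  refine (pi_eq fun s hs ↦ ?_).symm
  have h2s : MeasurableSet (Set.univ.pi s) := .pi Set.countable_univ fun i _ ↦ hs i
  rw [← pi_pi, ← lintegral_indicator_one h2s, ← lintegral_indicator_one h2s,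
    lintegral_map (measurable_one.indicator h2s) ht]
  refine lintegral_eq_of_lmarginal_eq {t.i} ((measurable_one.indicator h2s).comp ht)
    (measurable_one.indicator h2s) ?_
  simp_rw [lmarginal_singleton]
  ext x
  cases t with | mk t_i t_j t_hij t_c =>
  simp [transvection, single_mulVec, t_hij.symm, ← Function.update_add,
    lintegral_add_right_eq_self (μ := μ)
      fun xᵢ ↦ Set.indicator (Set.univ.pi s) 1 (Function.update x t_i xᵢ)]

/-- An invertible linear map of `F ^ ι` scales Haar measure by the absolute value of its
determinant. -/
theorem map_linear_pi (μ : Measure F) [μ.IsAddHaarMeasure] [μ.Regular]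
    (f : (ι → F) →ₗ[F] (ι → F)) (hf : LinearMap.det f ≠ 0) :
    ENNReal.ofReal (normalizedAbs (LinearMap.det f)) •
      Measure.map f (Measure.pi fun _ : ι => μ) = Measure.pi fun _ => μ := by
  classical
  obtain ⟨M, rfl⟩ := toLin'.surjective f
  rw [LinearMap.det_toLin'] at hf ⊢
  apply diagonal_transvection_induction_of_det_ne_zero _ M hf
  · intro D hD
    exact map_diagonal_pi μ hD
  · intro t
    rw [TransvectionStruct.det, normalizedAbs_one, ENNReal.ofReal_one, one_smul,
      measurePreserving_transvection]
  · intro A B _ _ IHA IHB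
    rw [toLin'_mul, det_mul, LinearMap.coe_comp, ← Measure.map_map
      (continuous_linear_pi _).measurable (continuous_linear_pi _).measurable, normalizedAbs_mul,
      ENNReal.ofReal_mul (normalizedAbs_nonneg _), mul_smul, ← Measure.map_smul, IHB, IHA]

theorem addHaar_pi_image (μ : Measure F) [μ.IsAddHaarMeasure] [μ.Regular]
    (f : (ι → F) ≃ₗ[F] (ι → F)) {A : Set (ι → F)} (hA : MeasurableSet A) :
    (Measure.pi fun _ : ι => μ) (f '' A)
      = ENNReal.ofReal (normalizedAbs (LinearMap.det (f : (ι → F) →ₗ[F] (ι → F))))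
        * (Measure.pi fun _ : ι => μ) A := by
  have hdet : LinearMap.det (f : (ι → F) →ₗ[F] (ι → F)) ≠ 0 := f.isUnit_det'.ne_zero
  have hfA : MeasurableSet (f '' A) := by
    rw [f.image_eq_preimage_symm]
    exact (continuous_linear_pi f.symm.toLinearMap).measurable hA
  conv_lhs => rw [← map_linear_pi μ f.toLinearMap hdet]
  rw [Measure.smul_apply, smul_eq_mul, Measure.map_apply
    (continuous_linear_pi f.toLinearMap).measurable hfA]
  congr 2
  exact Set.preimage_image_eq A f.injective

end Determinant

theorem normalizedAbs_eq_norm {F : Type*} [Field F] [ValuativeRel F] [TopologicalSpace F]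
    [IsNonarchimedeanLocalField F] {E : Type*} [Field E] [Algebra F E] [Module.Finite F E]
    [TopologicalSpace E] [IsModuleTopology F E] [IsTopologicalRing E] [LocallyCompactSpace E]
    (x : E) : normalizedAbs x = normalizedAbs (Algebra.norm F x) := by
  rcases eq_or_ne x 0 with rfl | hx
  · rw [normalizedAbs_zero, Algebra.norm_zero, normalizedAbs_zero]
  obtain ⟨_, _⟩ := secondCountable_and_t2 F
  borelize F E
  let b := Module.finBasis F E
  let μ : Measure (Fin (Module.finrank F E) → F) := Measure.pi fun _ => addHaar
  let Φ : E ≃L[F] (Fin (Module.finrank F E) → F) :=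
    { b.equivFun with
      continuous_toFun := IsModuleTopology.continuous_of_linearMap b.equivFun.toLinearMap
      continuous_invFun := IsModuleTopology.continuous_of_linearMap b.equivFun.symm.toLinearMap }
  have hsc : SecondCountableTopology E := Φ.toHomeomorph.secondCountableTopology
  let ν : Measure E := Measure.map Φ.symm μ
  have hν : ν.IsAddHaarMeasure := Φ.symm.isAddHaarMeasure_map μ
  have hT2 : T2Space E := Φ.toHomeomorph.symm.t2Space
  have hreg : ν.Regular := inferInstance
  let A : Set (Fin (Module.finrank F E) → F) := (ball (Fin (Module.finrank F E)) (1 : F) : Set _)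
  have hA : MeasurableSet A := (isOpen_ball one_ne_zero).measurableSet
  have hνA : ∀ T : Set (Fin (Module.finrank F E) → F), MeasurableSet T →
      ν (Φ.symm '' T) = μ T := by
    intro T hT
    have hT' : MeasurableSet (Φ.symm '' T) := Φ.symm.toHomeomorph.measurableEmbedding.measurableSet_image' hT
    rw [Measure.map_apply Φ.symm.continuous.measurable hT', Set.preimage_image_eq _ Φ.symm.injective]
  rw [normalizedAbs_of_ne_zero hx]
  have hN : LinearMap.det (LinearMap.mulLeft F x) = Algebra.norm F x := rfl
  let m : E ≃ₗ[F] E := LinearEquiv.ofBijective (LinearMap.mulLeft F x)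
    ⟨fun _ _ h => mul_left_cancel₀ hx h, fun y => ⟨x⁻¹ * y, by simp [hx]⟩⟩
  let f : (Fin (Module.finrank F E) → F) ≃ₗ[F] (Fin (Module.finrank F E) → F) :=
    (b.equivFun.symm.trans m).trans b.equivFun
  have hf : LinearMap.det (f : (Fin (Module.finrank F E) → F) →ₗ[F] _) = Algebra.norm F x := by
    rw [← hN, ← LinearMap.det_conj (LinearMap.mulLeft F x) b.equivFun]
    rfl
  have hxA : (Units.mk0 x hx) • (Φ.symm '' A) = Φ.symm '' (f '' A) := by
    rw [← Set.image_smul, Set.image_image, Set.image_image]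
    refine Set.image_congr fun z _ => ?_
    exact (b.equivFun.symm_apply_apply (x * b.equivFun.symm z)).symm
  have hfA : MeasurableSet (f '' A) := by
    rw [f.image_eq_preimage_symm]
    exact (continuous_linear_pi f.symm.toLinearMap).measurable hA
  have h0 : μ A ≠ 0 := (IsOpen.measure_pos μ (isOpen_ball one_ne_zero) ⟨0, zero_mem _⟩).ne'
  have htop : μ A ≠ ⊤ := (isCompact_ball 1).measure_lt_top.ne
  have := distribHaarChar_eq_of_measure_smul_eq_mul (μ := ν) (s := Φ.symm '' A)
    (g := Units.mk0 x hx) (r := (normalizedAbs (Algebra.norm F x)).toNNReal)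
    (by rwa [hνA A hA]) (by rwa [hνA A hA])
    (by rw [hxA, hνA _ hfA, hνA A hA, addHaar_pi_image _ _ hA, hf]; rfl)
  rw [this, Real.coe_toNNReal _ (normalizedAbs_nonneg _)]

end Kudla

namespace Kudla

open ValuativeRel Topology Matrix MeasureTheory Measure
open scoped NNReal ENNReal Pointwise

set_option linter.unusedSectionVars false
set_option linter.overlappingInstances false

section Intertwiner

variable {F W S : Type*} [Field F] [CharZero F] [ValuativeRel F] [TopologicalSpace F]
  [IsNonarchimedeanLocalField F] [AddCommGroup W] [Module F W] [TopologicalSpace W]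
  [IsModuleTopology F W] [AddCommGroup S] [Module ℂ S]
  {χ : AddChar F ℂ} {B : W →ₗ[F] W →ₗ[F] F} {ρ : W → Module.End ℂ S}
  {L M : Submodule F W} {ι κ ν : Type*} [Fintype ι] [Fintype κ] [Fintype ν]
  {l : Module.Dual ℂ S} {j : (ν → F) →ₗ[F] W}

namespace IsWeylSystem

theorem isLocallyConstant_matrixCoeff (hρ : IsWeylSystem χ B ρ)
    (hj : ∀ z z', B (j z) (j z') = 0) (l : Module.Dual ℂ S) (φ : S) :
    IsLocallyConstant fun z => l (ρ (j z) φ) := by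
  rw [IsLocallyConstant.iff_eventually_eq]
  intro z
  obtain ⟨c, hc, h⟩ := hρ.eventually_fixed j φ
  have h0 : Filter.Tendsto (fun z' => z' - z) (𝓝 z) (𝓝 0) := by
    have : Continuous fun z' : ν → F => z' - z := by fun_prop
    simpa using this.tendsto z
  filter_upwards [h0 (ball_mem_nhds hc)] with z' hz'
  have h1 := hρ.map_mul (j z) (j (z' - z)) φ
  rw [hj, AddChar.map_zero_eq_one, one_smul, ← _root_.map_add, add_sub_cancel, h _ hz'] at h1
  rw [h1]

theorem hasCompactSupport_matrixCoeff (hρ : IsWeylSystem χ B ρ) (f : Frame B L ι)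
    (hl : IsInvariantUnder ρ L l) [T2Space F] {g : (ι → F) →ₗ[F] (ν → F)}
    (hg : ∀ z, g (f.y (j z)) = z) (φ : S) : HasCompactSupport fun z => l (ρ (j z) φ) := by
  obtain ⟨a, ha0, ha⟩ := hρ.exists_conductor
  obtain ⟨c, hc, hcφ⟩ := hρ.eventually_fixed f.e φ
  refine HasCompactSupport.intro ((isCompact_ball (a / c)).image (continuous_linear_pi g))
    fun z hz => ?_
  by_contra hne
  exact hz ⟨f.y (j z), hρ.support f hl ha hc hcφ hne, hg z⟩

variable [SecondCountableTopology F] [T2Space F] [MeasurableSpace F] [BorelSpace F]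

theorem integrable_matrixCoeff (hρ : IsWeylSystem χ B ρ) (f : Frame B L ι)
    (hl : IsInvariantUnder ρ L l) (hj : ∀ z z', B (j z) (j z') = 0) {g : (ι → F) →ₗ[F] (ν → F)}
    (hg : ∀ z, g (f.y (j z)) = z) (φ : S) :
    Integrable (fun z => l (ρ (j z) φ)) (Measure.pi fun _ : ν => (addHaar : Measure F)) :=
  (hρ.isLocallyConstant_matrixCoeff hj l φ).continuous.integrable_of_hasCompactSupport
    (hρ.hasCompactSupport_matrixCoeff f hl hg φ)

/-- The functional obtained from `l` by integrating over the image of `j`. -/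
noncomputable def integralFunctional (hρ : IsWeylSystem χ B ρ) (f : Frame B L ι)
    (hl : IsInvariantUnder ρ L l) (hj : ∀ z z', B (j z) (j z') = 0) {g : (ι → F) →ₗ[F] (ν → F)}
    (hg : ∀ z, g (f.y (j z)) = z) : Module.Dual ℂ S where
  toFun φ := ∫ z, l (ρ (j z) φ) ∂(Measure.pi fun _ : ν => (addHaar : Measure F))
  map_add' φ φ' := by
    simp only [_root_.map_add]
    exact integral_add (hρ.integrable_matrixCoeff f hl hj hg φ)
      (hρ.integrable_matrixCoeff f hl hj hg φ')
  map_smul' c φ := by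
    simp only [map_smul, RingHom.id_apply]
    exact integral_smul _ _

theorem integralFunctional_ne_zero (hρ : IsWeylSystem χ B ρ) (f : Frame B L ι) (hl0 : l ≠ 0)
    (hl : IsInvariantUnder ρ L l) (hj : ∀ z z', B (j z) (j z') = 0) {g : (ι → F) →ₗ[F] (ν → F)}
    (hg : ∀ z, g (f.y (j z)) = z) : hρ.integralFunctional f hl hj hg ≠ 0 := by
  obtain ⟨a, ha0, ha⟩ := hρ.exists_conductor
  obtain ⟨φ, hφ⟩ : ∃ φ, l φ ≠ 0 := by
    by_contra! h
    exact hl0 (LinearMap.ext h)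
  obtain ⟨c, hc, hcφ⟩ := hρ.eventually_fixed f.e φ
  obtain ⟨c', hc', hcφ'⟩ := hρ.eventually_fixed j φ
  have hgc := (continuous_linear_pi g).tendsto 0
  rw [_root_.map_zero] at hgc
  obtain ⟨d, hd, hdg⟩ := exists_ball_subset (hgc (ball_mem_nhds hc'))
  obtain ⟨n, φ', hn, h⟩ := hρ.exists_average f ha hc (div_ne_zero ha0 hd) hcφ
  obtain ⟨-, h1, h2⟩ := h l hl
  rw [div_div_cancel₀ ha0] at h1 h2
  intro h0
  have h3 := LinearMap.congr_fun h0 φ'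
  have hyj : Continuous (f.y ∘ₗ j) := continuous_linear_pi _
  let T : Set (ν → F) := (f.y ∘ₗ j) ⁻¹' (ball ι d)
  have hT : IsOpen T := (isOpen_ball hd).preimage hyj
  have hTc : T ⊆ (ball ν c' : Set (ν → F)) := fun z hz => by
    have : f.y (j z) ∈ g ⁻¹' (ball ν c' : Set (ν → F)) := hdg hz
    rwa [Set.mem_preimage, hg] at this
  have h4 : (fun z => l (ρ (j z) φ')) = T.indicator fun _ => n * l φ := by
    ext z
    by_cases hz : z ∈ T
    · rw [Set.indicator_of_mem hz, h1 (j z) hz, hcφ' z (hTc hz)]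
    · rw [Set.indicator_of_notMem hz, h2 (j z) hz]
  change ∫ z, l (ρ (j z) φ') ∂(Measure.pi fun _ : ν => (addHaar : Measure F)) = 0 at h3
  rw [h4, integral_indicator_const _ hT.measurableSet, smul_eq_zero] at h3
  rcases h3 with h3 | h3
  · rw [measureReal_eq_zero_iff ((measure_mono hTc).trans_lt (isCompact_ball c').measure_lt_top).ne]
      at h3
    exact (hT.measure_pos _ ⟨0, by simp [T, (ball ι d).zero_mem]⟩).ne' h3
  · exact mul_ne_zero (Nat.cast_ne_zero.2 hn) hφ h3

theorem ratio_of_section (hρ : IsWeylSystem χ B ρ) (fL : Frame B L ι) (fM : Frame B M κ)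
    {l m : Module.Dual ℂ S} (hl0 : l ≠ 0) (hl : IsInvariantUnder ρ L l) (hm0 : m ≠ 0)
    (hm : IsInvariantUnder ρ M m) {P : Module.End ℂ S} {h : W →ₗ[F] W}
    (hP : ∀ w φ, P (ρ w φ) = ρ (h w) (P φ)) (hM : ∀ w ∈ M, h w ∈ M)
    {a b : ℂ} (ha : ∀ φ, l (P φ) = a * l φ) (hb : ∀ φ, m (P φ) = b * m φ)
    (hjM : ∀ z, j z ∈ M) {g : (ι → F) →ₗ[F] (ν → F)} (hg : ∀ z, g (fL.y (j z)) = z)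
    (hjd : ∀ w ∈ M, ∃ z, w - j z ∈ L)
    (k : (ν → F) →ₗ[F] (ν → F)) (hk : ∀ z, j (k z) - h (j z) ∈ L) (hk0 : LinearMap.det k ≠ 0) :
    b = a * normalizedAbs (LinearMap.det k) := by
  have hiso : ∀ w ∈ M, ∀ w' ∈ M, B w w' = 0 := fun w hw w' hw' => frame_isotropic fM hw hw'
  have hj : ∀ z z', B (j z) (j z') = 0 := fun z z' => hiso _ (hjM z) _ (hjM z')
  have hadd : ∀ w ∈ M, ∀ w' ∈ M, w - w' ∈ L → ∀ φ, l (ρ w φ) = l (ρ w' φ) := by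
    intro w hw w' hw' hww φ
    have := hρ.map_mul (w - w') w' φ
    rw [hiso _ (M.sub_mem hw hw') _ hw', AddChar.map_zero_eq_one, one_smul, sub_add_cancel] at this
    rw [← this, hl _ hww]
  set Φ := hρ.integralFunctional fL hl hj hg with hΦ
  have hΦ0 : Φ ≠ 0 := hρ.integralFunctional_ne_zero fL hl0 hl hj hg
  have hΦM : IsInvariantUnder ρ M Φ := by
    intro w hw φ
    obtain ⟨z₁, hz₁⟩ := hjd w hw
    change ∫ z, l (ρ (j z) (ρ w φ)) ∂(Measure.pi fun _ : ν => (addHaar : Measure F))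
      = ∫ z, l (ρ (j z) φ) ∂(Measure.pi fun _ : ν => (addHaar : Measure F))
    rw [← integral_add_right_eq_self (fun z => l (ρ (j z) φ)) z₁]
    refine integral_congr_ae (Filter.Eventually.of_forall fun z => ?_)
    dsimp only
    rw [hρ.map_mul, hiso _ (hjM z) _ hw, AddChar.map_zero_eq_one, one_smul]
    refine hadd _ (M.add_mem (hjM z) hw) _ (hjM _) ?_ φ
    rwa [_root_.map_add, add_sub_add_left_eq_sub]
  have hΦP : ∀ φ, Φ (P φ) = a * normalizedAbs (LinearMap.det k) * Φ φ := by
    intro φ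
    change ∫ z, l (ρ (j z) (P φ)) ∂(Measure.pi fun _ : ν => (addHaar : Measure F))
      = _ * ∫ z, l (ρ (j z) φ) ∂(Measure.pi fun _ : ν => (addHaar : Measure F))
    have h1 := map_linear_pi (addHaar : Measure F) k hk0
    conv_lhs => rw [← h1]
    have hcont : Continuous fun z => l (ρ (j z) (P φ)) :=
      (hρ.isLocallyConstant_matrixCoeff hj l (P φ)).continuous
    rw [integral_smul_measure, integral_map (continuous_linear_pi k).aemeasurable
      hcont.aestronglyMeasurable, ENNReal.toReal_ofReal (normalizedAbs_nonneg _)]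
    have h2 : ∀ z, l (ρ (j (k z)) (P φ)) = a * l (ρ (j z) φ) := by
      intro z
      rw [hadd _ (hjM _) _ (hM _ (hjM z)) (hk z), ← hP, ha]
    simp only [h2]
    rw [integral_const_mul, Complex.real_smul]
    ring
  obtain ⟨c, hc⟩ := hρ.functional_unique fM hm0 hm hΦM
  obtain ⟨φ, hφ⟩ : ∃ φ, Φ φ ≠ 0 := by
    by_contra! h
    exact hΦ0 (LinearMap.ext h)
  refine mul_right_cancel₀ hφ ?_
  rw [← hΦP, hc, LinearMap.smul_apply, LinearMap.smul_apply, hb, smul_eq_mul, smul_eq_mul]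
  ring

end IsWeylSystem

theorem det_restrict_inf [Module.Finite F W] (h : W ≃ₗ[F] W) (hL : ∀ w ∈ L, h w ∈ L)
    (hM : ∀ w ∈ M, h w ∈ M) :
    ∃ hN : (M ⊓ L).comap M.subtype ≤ ((M ⊓ L).comap M.subtype).comap (h.toLinearMap.restrict hM),
    LinearMap.det (h.toLinearMap.restrict hM) =
      LinearMap.det (h.toLinearMap.restrict (p := M ⊓ L) (q := M ⊓ L)
        fun w hw => ⟨hM w hw.1, hL w hw.2⟩) *
      LinearMap.det (((M ⊓ L).comap M.subtype).mapQ _ (h.toLinearMap.restrict hM) hN) := by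
  refine ⟨fun w hw => ⟨hM _ hw.1, hL _ hw.2⟩, ?_⟩
  rw [LinearMap.det_eq_det_mul_det ((M ⊓ L).comap M.subtype) (h.toLinearMap.restrict hM)
    fun w hw => ⟨hM _ hw.1, hL _ hw.2⟩]
  congr 1
  rw [← LinearMap.det_conj _ (Submodule.comapSubtypeEquivOfLe (inf_le_left : M ⊓ L ≤ M))]
  rfl

theorem det_restrict_ne_zero [Module.Finite F W] (h : W ≃ₗ[F] W) (hL : ∀ w ∈ L, h w ∈ L) :
    LinearMap.det (h.toLinearMap.restrict hL) ≠ 0 := by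
  have hinj : Function.Injective (h.toLinearMap.restrict hL) := fun x y hxy =>
    Subtype.ext (h.injective (congrArg Subtype.val hxy))
  have := LinearEquiv.isUnit_det' (LinearEquiv.ofInjectiveEndo _ hinj)
  exact this.ne_zero

/-- Comparison of the eigenvalues, on functionals invariant under two Lagrangian subspaces, of an
operator which implements a linear automorphism preserving both subspaces. -/
theorem IsWeylSystem.ratio [Module.Finite F W] (hρ : IsWeylSystem χ B ρ) (fL : Frame B L ι)
    (fM : Frame B M κ) {l m : Module.Dual ℂ S} (hl0 : l ≠ 0) (hl : IsInvariantUnder ρ L l)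
    (hm0 : m ≠ 0) (hm : IsInvariantUnder ρ M m) {P : Module.End ℂ S} {h : W ≃ₗ[F] W}
    (hP : ∀ w φ, P (ρ w φ) = ρ (h w) (P φ)) (hL : ∀ w ∈ L, h w ∈ L) (hM : ∀ w ∈ M, h w ∈ M)
    {a b : ℂ} (ha : ∀ φ, l (P φ) = a * l φ) (hb : ∀ φ, m (P φ) = b * m φ) :
    b * normalizedAbs (LinearMap.det (h.toLinearMap.restrict (p := M ⊓ L) (q := M ⊓ L)
        fun w hw => ⟨hM w hw.1, hL w hw.2⟩))
      = a * normalizedAbs (LinearMap.det (h.toLinearMap.restrict hM)) := by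
  obtain ⟨_, _⟩ := secondCountable_and_t2 F
  borelize F
  obtain ⟨hN, hdet⟩ := det_restrict_inf h hL hM
  set N := (M ⊓ L).comap M.subtype with hNdef
  set k₀ := N.mapQ N (h.toLinearMap.restrict hM) hN with hk₀
  obtain ⟨σ, hσ⟩ := N.mkQ.exists_rightInverse_of_surjective (LinearMap.range_eq_top.2 N.mkQ_surjective)
  have hσ' : ∀ q, N.mkQ (σ q) = q := fun q => LinearMap.congr_fun hσ q
  let b₀ := Module.finBasis F (M ⧸ N)
  let β := b₀.equivFun
  let j : (Fin (Module.finrank F (M ⧸ N)) → F) →ₗ[F] W := M.subtype ∘ₗ σ ∘ₗ β.symm.toLinearMap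
  have hmk : ∀ x y : M, N.mkQ x = N.mkQ y → (x : W) - y ∈ L := by
    intro x y hxy
    have := (Submodule.Quotient.eq N).1 hxy
    exact this.2
  have hinj : Function.Injective (fL.y ∘ₗ j) := by
    rw [← LinearMap.ker_eq_bot, LinearMap.ker_eq_bot']
    intro z hz
    have h1 : j z ∈ L := (fL.mem_iff _).2 hz
    have h2 : σ (β.symm z) ∈ N := ⟨Subtype.coe_prop _, h1⟩
    have h3 : N.mkQ (σ (β.symm z)) = 0 := (Submodule.Quotient.mk_eq_zero N).2 h2
    rw [hσ'] at h3
    simpa using h3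
  obtain ⟨g, hg⟩ := LinearMap.exists_leftInverse_of_injective (fL.y ∘ₗ j)
    (LinearMap.ker_eq_bot.2 hinj)
  have hk0 : LinearMap.det k₀ ≠ 0 := fun h0 => det_restrict_ne_zero h hM (by
    rw [hdet, h0, mul_zero])
  have hkdet : LinearMap.det (β.toLinearMap ∘ₗ k₀ ∘ₗ β.symm.toLinearMap) = LinearMap.det k₀ :=
    LinearMap.det_conj k₀ β
  have := hρ.ratio_of_section (j := j) (g := g) fL fM hl0 hl hm0 hm hP hM ha hb
    (fun z => Subtype.coe_prop _) (fun z => LinearMap.congr_fun hg z)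
    (fun w hw => ⟨β (N.mkQ ⟨w, hw⟩), hmk ⟨w, hw⟩ _ (by
      simp only [LinearMap.comp_apply, LinearEquiv.coe_coe, LinearEquiv.symm_apply_apply, hσ'])⟩)
    (β.toLinearMap ∘ₗ k₀ ∘ₗ β.symm.toLinearMap)
    (fun z => hmk (σ (β.symm (β (k₀ (β.symm z))))) (h.toLinearMap.restrict hM (σ (β.symm z))) (by
      rw [hσ', LinearEquiv.symm_apply_apply]
      conv_lhs => rw [← hσ' (β.symm z)]
      rfl))
    (by rwa [hkdet])
  rw [this, hdet, hkdet, normalizedAbs_mul]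
  push_cast
  ring

end Intertwiner

end Kudla

namespace Kudla

open scoped TensorProduct Matrix
open Polynomial

set_option linter.unusedSectionVars false

section Simple

variable (E K R : Type*) [Field E] [Field K] [Algebra E K] [DivisionRing R] [Algebra E R]
  [Algebra.IsCentral E R]

/-- Extension of scalars of a central division algebra is simple. -/
theorem isSimpleRing_tensorProduct : IsSimpleRing (K ⊗[E] R) := by
  rw [isSimpleRing_iff_isTwoSided_imp]
  refine ⟨inferInstance, fun I hI => or_iff_not_imp_left.2 fun hne => ?_⟩
  classical
  let b := Module.Basis.ofVectorSpace E K
  let Ψ := TensorProduct.equivFinsuppOfBasisLeft (N := R) b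
  have hr : ∀ z d i, Ψ (z * (1 ⊗ₜ d)) i = Ψ z i * d := by
    intro z d i
    induction z using TensorProduct.induction_on with
    | zero => simp
    | tmul k x =>
      rw [Algebra.TensorProduct.tmul_mul_tmul, mul_one]
      simp only [Ψ, TensorProduct.equivFinsuppOfBasisLeft_apply_tmul_apply, smul_mul_assoc]
    | add x y hx hy => rw [add_mul, map_add, Finsupp.add_apply, hx, hy, map_add, Finsupp.add_apply,
        add_mul]
  have hl : ∀ z d i, Ψ ((1 ⊗ₜ d) * z) i = d * Ψ z i := by
    intro z d i
    induction z using TensorProduct.induction_on with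
    | zero => simp
    | tmul k x =>
      rw [Algebra.TensorProduct.tmul_mul_tmul, one_mul]
      simp only [Ψ, TensorProduct.equivFinsuppOfBasisLeft_apply_tmul_apply, mul_smul_comm]
    | add x y hx hy => rw [mul_add, map_add, Finsupp.add_apply, hx, hy, map_add, Finsupp.add_apply,
        mul_add]
  have hex : ∃ n, ∃ z ∈ I, z ≠ 0 ∧ (Ψ z).support.card = n := by
    obtain ⟨z, hz, hz0⟩ := Submodule.exists_mem_ne_zero_of_ne_bot hne
    exact ⟨_, z, hz, hz0, rfl⟩
  obtain ⟨z, hzI, hz0, hzn⟩ := Nat.find_spec hex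
  have hmin : ∀ u ∈ I, (Ψ u).support.card < (Ψ z).support.card → u = 0 := by
    intro u hu hlt
    by_contra hu0
    rw [hzn] at hlt
    exact Nat.find_min hex hlt ⟨u, hu, hu0, rfl⟩
  obtain ⟨i₀, hi₀⟩ : ∃ i, Ψ z i ≠ 0 := by
    by_contra! h
    exact hz0 (Ψ.map_eq_zero_iff.1 (Finsupp.ext h))
  set z' := z * (1 ⊗ₜ (Ψ z i₀)⁻¹) with hz'
  have hz'I : z' ∈ I := I.mul_mem_right _ hzI
  have hΨz' : ∀ i, Ψ z' i = Ψ z i * (Ψ z i₀)⁻¹ := fun i => hr z _ i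
  have hz'i₀ : Ψ z' i₀ = 1 := by rw [hΨz', mul_inv_cancel₀ hi₀]
  have hcomm : ∀ i d, Ψ z' i * d = d * Ψ z' i := by
    intro i d
    have hu : z' * (1 ⊗ₜ d) - (1 ⊗ₜ d) * z' = 0 := by
      refine hmin _ (I.sub_mem (I.mul_mem_right _ hz'I) (I.mul_mem_left _ hz'I))
        (Finset.card_lt_card ?_)
      rw [Finset.ssubset_iff_of_subset]
      · refine ⟨i₀, by simpa using hi₀, ?_⟩
        rw [Finsupp.notMem_support_iff, map_sub, Finsupp.sub_apply, hr, hl, hz'i₀, one_mul, mul_one,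
          sub_self]
      · intro i hi
        rw [Finsupp.mem_support_iff] at hi ⊢
        intro h0
        apply hi
        rw [map_sub, Finsupp.sub_apply, hr, hl, hΨz', h0, zero_mul, zero_mul, mul_zero, sub_self]
    have := congrArg (fun u => Ψ u i) hu
    simp only [map_sub, Finsupp.sub_apply, hr, hl, map_zero, Finsupp.zero_apply] at this
    exact sub_eq_zero.1 this
  have hcen : ∀ i, ∃ c : E, Ψ z' i = algebraMap E R c := fun i =>
    (Algebra.IsCentral.mem_center_iff E).1 (Subalgebra.mem_center_iff.2 fun d => (hcomm i d).symm)
  choose c hc using hcen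
  obtain ⟨k, hk⟩ : ∃ k : K, z' = k ⊗ₜ 1 := by
    refine ⟨(Ψ z').sum fun i _ => c i • b i, ?_⟩
    have hsum := TensorProduct.equivFinsuppOfBasisLeft_symm_apply (N := R) b (Ψ z')
    rw [show (TensorProduct.equivFinsuppOfBasisLeft b).symm (Ψ z') = z' from
      Ψ.symm_apply_apply z', Finsupp.sum] at hsum
    rw [Finsupp.sum, TensorProduct.sum_tmul]
    refine hsum.trans ?_
    refine Finset.sum_congr rfl fun i _ => ?_
    rw [hc, Algebra.algebraMap_eq_smul_one, TensorProduct.tmul_smul, TensorProduct.smul_tmul']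
  have hk0 : k ≠ 0 := by
    rintro rfl
    rw [TensorProduct.zero_tmul] at hk
    rw [hk, map_zero, Finsupp.zero_apply] at hz'i₀
    exact zero_ne_one hz'i₀
  rw [Ideal.eq_top_iff_one]
  have := I.mul_mem_left (k⁻¹ ⊗ₜ 1) hz'I
  rwa [hk, Algebra.TensorProduct.tmul_mul_tmul, inv_mul_cancel₀ hk0, one_mul,
    ← Algebra.TensorProduct.one_def] at this

theorem isSimpleRing_tensorProduct_end (X : Type*) [AddCommGroup X] [Module E X] [Module R X]
    [IsScalarTower E R X] [Module.Finite R X] [Nontrivial X] :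
    IsSimpleRing (K ⊗[E] Module.End R X) := by
  let n := Module.finrank R X
  have : Nonempty (Fin n) := ⟨⟨0, Module.finrank_pos⟩⟩
  let e₁ : Module.End R X ≃ₐ[E] Matrix (Fin n) (Fin n) Rᵐᵒᵖ :=
    ((Module.finBasis R X).equivFun.conjAlgEquiv E).trans
      ((endVecAlgEquivMatrixEnd (Fin n) E R R).trans
        (AlgEquiv.moduleEndSelf E (A := R)).symm.mapMatrix)
  let e₂ : K ⊗[E] Module.End R X ≃ₐ[E] Matrix (Fin n) (Fin n) (K ⊗[E] Rᵐᵒᵖ) :=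
    (Algebra.TensorProduct.congr AlgEquiv.refl
        (e₁.trans (matrixEquivTensor (Fin n) E Rᵐᵒᵖ))).trans
      ((Algebra.TensorProduct.assoc E E E K Rᵐᵒᵖ (Matrix (Fin n) (Fin n) E)).symm.trans
        (matrixEquivTensor (Fin n) E (K ⊗[E] Rᵐᵒᵖ)).symm)
  have := isSimpleRing_tensorProduct E K Rᵐᵒᵖ
  exact IsSimpleRing.of_ringEquiv e₂.symm.toRingEquiv inferInstance

end Simple

section Determinants

theorem det_mulLeft_matrix {K : Type*} [Field K] {n : ℕ} (M : Matrix (Fin n) (Fin n) K) :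
    LinearMap.det (LinearMap.mulLeft K M) = M.det ^ n := by
  have h := LinearMap.det_pi (ι := Fin n) fun _ => Matrix.toLin' M
  rw [LinearMap.det_toLin', Finset.prod_const, Finset.card_univ, Fintype.card_fin] at h
  rw [← h]
  let e : Matrix (Fin n) (Fin n) K ≃ₗ[K] (Fin n → Fin n → K) :=
    Matrix.transposeLinearEquiv (Fin n) (Fin n) K K
  rw [← LinearMap.det_conj (LinearMap.mulLeft K M) e]
  congr 1

variable {E : Type*} [Field E] {A : Type*} [Ring A] [Algebra E A] [Module.Finite E A]
  {K : Type*} [Field K] [Algebra E K]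

theorem algebraMap_det_mulLeft {n : ℕ} (f : K ⊗[E] A ≃ₐ[K] Matrix (Fin n) (Fin n) K) (a : A) :
    algebraMap E K (LinearMap.det (LinearMap.mulLeft E a)) = (f (1 ⊗ₜ a)).det ^ n := by
  have h : (LinearMap.mulLeft E a).baseChange K = LinearMap.mulLeft K (1 ⊗ₜ[E] a) := by
    ext x
    simp
  rw [← LinearMap.det_baseChange, ← det_mulLeft_matrix, h, ← LinearMap.det_conj _ f.toLinearEquiv]
  congr 1
  ext1 M
  exact (map_mul f _ _).trans (congrArg _ (f.apply_symm_apply M))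

theorem sq_eq_finrank {n : ℕ} (f : K ⊗[E] A ≃ₐ[K] Matrix (Fin n) (Fin n) K) :
    n ^ 2 = Module.finrank E A := by
  have := f.toLinearEquiv.finrank_eq
  rw [Module.finrank_baseChange, Module.finrank_matrix] at this
  simp at this
  rw [this, sq]

theorem exists_isReducedNorm [CharZero E] {n : ℕ}
    (f : AlgebraicClosure E ⊗[E] A ≃ₐ[AlgebraicClosure E]
      Matrix (Fin n) (Fin n) (AlgebraicClosure E)) (a : A) : ∃ c : E, IsReducedNorm a c := by
  suffices h : (f (1 ⊗ₜ a)).det ∈ Set.range (algebraMap E (AlgebraicClosure E)) by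
    obtain ⟨c, hc⟩ := h
    exact ⟨c, n, f, hc⟩
  rw [InfiniteGalois.mem_range_algebraMap_iff_fixed]
  intro σ
  rcases eq_or_ne n 0 with rfl | hn
  · simp
  let P := (f (1 ⊗ₜ a)).charpoly
  have hP : P.Monic := Matrix.charpoly_monic _
  have hPσ : (P.map (σ : AlgebraicClosure E →+* AlgebraicClosure E)).Monic := hP.map _
  have heval : ∀ t : E, ∃ c : E, P.eval (algebraMap E _ t) ^ n = algebraMap E _ c := by
    intro t
    refine ⟨_, ((algebraMap_det_mulLeft f (algebraMap E A t - a)).trans ?_).symm⟩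
    rw [Matrix.eval_charpoly]
    congr 2
    rw [TensorProduct.tmul_sub, map_sub]
    congr 1
    rw [Algebra.algebraMap_eq_smul_one, TensorProduct.tmul_smul, ← Algebra.TensorProduct.one_def,
      ← algebraMap_smul (AlgebraicClosure E), map_smul, map_one, Matrix.smul_one_eq_diagonal]
    rfl
  have hpow : P.map (σ : AlgebraicClosure E →+* AlgebraicClosure E) ^ n = P ^ n := by
    refine Polynomial.eq_of_infinite_eval_eq _ _ (Set.Infinite.mono ?_
      (Set.infinite_range_of_injective (algebraMap E (AlgebraicClosure E)).injective))
    rintro _ ⟨t, rfl⟩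
    obtain ⟨c, hc⟩ := heval t
    have h1 : (P.map (σ : AlgebraicClosure E →+* AlgebraicClosure E)).eval
        (algebraMap E (AlgebraicClosure E) t) = σ (P.eval (algebraMap E (AlgebraicClosure E) t)) := by
      conv_lhs => rw [← AlgEquiv.commutes σ t]
      exact Polynomial.eval_map_apply (σ : AlgebraicClosure E →+* AlgebraicClosure E) _
    rw [Set.mem_ofPred_eq, eval_pow, eval_pow, h1, ← map_pow, hc, AlgEquiv.commutes]
  have heq : P.map (σ : AlgebraicClosure E →+* AlgebraicClosure E) = P := by
    refine Polynomial.eq_of_monic_of_associated hPσ hP ?_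
    rw [← Associated.pow_iff hn, hpow]
  rw [Matrix.det_eq_sign_charpoly_coeff, map_mul, map_pow, map_neg, map_one]
  congr 1
  conv_rhs => rw [← show P = (f (1 ⊗ₜ a)).charpoly from rfl, ← heq]
  rw [Polynomial.coeff_map]
  rfl

theorem reducedNorm_spec {a : A} (h : ∃ c : E, IsReducedNorm a c) :
    IsReducedNorm a (reducedNorm E a) := by
  rw [reducedNorm, dif_pos h]
  exact h.choose_spec

end Determinants

section Endomorphisms

variable {E R X : Type*} [Field E] [DivisionRing R] [Algebra E R] [Module.Finite E R]
  [AddCommGroup X] [Module E X] [Module R X] [IsScalarTower E R X] [Module.Finite R X]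

theorem finite_end : Module.Finite E (Module.End R X) :=
  have : Module.Finite E X := Module.Finite.trans R X
  Module.Finite.equiv ((Module.finBasis R X).constr E (M' := X))

theorem finrank_end : Module.finrank E (Module.End R X)
    = Module.finrank R X ^ 2 * Module.finrank E R := by
  have : Module.Finite E X := Module.Finite.trans R X
  rw [← ((Module.finBasis R X).constr E (M' := X)).finrank_eq, Module.finrank_pi_fintype,
    Finset.sum_const, Finset.card_univ, Fintype.card_fin, smul_eq_mul,
    ← Module.finrank_mul_finrank E R X]
  ring

theorem det_mulLeft_end (a : Module.End R X) :
    LinearMap.det (LinearMap.mulLeft E a)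
      = LinearMap.det (a.restrictScalars E : X →ₗ[E] X) ^ Module.finrank R X := by
  have : Module.Finite E X := Module.Finite.trans R X
  have h := LinearMap.det_pi (ι := Fin (Module.finrank R X))
    fun _ => (a.restrictScalars E : X →ₗ[E] X)
  rw [Finset.prod_const, Finset.card_univ, Fintype.card_fin] at h
  let e := (Module.finBasis R X).constr E (M' := X)
  rw [← h, ← LinearMap.det_conj _ e]
  congr 1
  ext1 φ
  obtain ⟨v, rfl⟩ := e.surjective φ
  simp only [LinearMap.comp_apply, LinearEquiv.coe_coe, LinearEquiv.symm_apply_apply,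
    LinearMap.mulLeft_apply]
  refine (Module.finBasis R X).ext fun i => ?_
  simp [e]

/-- The absolute value of the reduced norm in terms of a determinant over the center. -/
theorem normalizedAbs_reducedNorm [CharZero E] [Algebra.IsCentral E R] [TopologicalSpace E]
    [IsTopologicalRing E] [LocallyCompactSpace E] (a : Module.End R X) :
    normalizedAbs (reducedNorm E a) ^ Nat.sqrt (Module.finrank E R)
      = normalizedAbs (LinearMap.det (a.restrictScalars E : X →ₗ[E] X)) := by
  have : Module.Finite E (Module.End R X) := finite_end
  have : Module.Finite E X := Module.Finite.trans R X
  rcases subsingleton_or_nontrivial X with hX | hX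
  · have hex : IsReducedNorm (E := E) a 1 := by
      refine ⟨0, ?_, by simp⟩
      have : Subsingleton (Module.End R X) := ⟨fun f g => LinearMap.ext fun x =>
        Subsingleton.elim _ _⟩
      have h0 : Subsingleton (AlgebraicClosure E ⊗[E] Module.End R X) :=
        ⟨fun x y => by
          have h1 : (1 : AlgebraicClosure E ⊗[E] Module.End R X) = 0 := by
            rw [Algebra.TensorProduct.one_def, Subsingleton.elim (1 : Module.End R X) 0,
              TensorProduct.tmul_zero]
          rw [← mul_one x, ← mul_one y, h1, mul_zero, mul_zero]⟩
      exact
        { toFun := fun _ => 0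
          invFun := fun _ => 0
          left_inv := fun _ => Subsingleton.elim _ _
          right_inv := fun _ => Subsingleton.elim _ _
          map_mul' := fun _ _ => Subsingleton.elim _ _
          map_add' := fun _ _ => Subsingleton.elim _ _
          commutes' := fun _ => Subsingleton.elim _ _ }
    obtain ⟨n, f, hf⟩ := reducedNorm_spec ⟨1, hex⟩
    have hn := sq_eq_finrank f
    rw [finrank_end, Module.finrank_zero_of_subsingleton] at hn
    obtain rfl : n = 0 := by simpa using hn
    rw [Matrix.det_isEmpty, ← map_one (algebraMap E _)] at hf
    rw [(algebraMap E _).injective hf, normalizedAbs_one, one_pow,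
      LinearMap.det_eq_one_of_subsingleton, normalizedAbs_one]
  · have hs := isSimpleRing_tensorProduct_end E (AlgebraicClosure E) R X
    have hs' := isSimpleRing_tensorProduct E (AlgebraicClosure E) R
    obtain ⟨d, -, ⟨f₀⟩⟩ := IsSimpleRing.exists_algEquiv_matrix_of_isAlgClosed (AlgebraicClosure E)
      (AlgebraicClosure E ⊗[E] R)
    obtain ⟨m, -, ⟨f₁⟩⟩ := IsSimpleRing.exists_algEquiv_matrix_of_isAlgClosed (AlgebraicClosure E)
      (AlgebraicClosure E ⊗[E] Module.End R X)
    obtain ⟨n, f, hf⟩ := reducedNorm_spec (exists_isReducedNorm f₁ a)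
    have hd := sq_eq_finrank f₀
    have hn := sq_eq_finrank f
    rw [finrank_end, ← hd, ← mul_pow] at hn
    have hn' : n = Module.finrank R X * d := Nat.pow_left_injective two_ne_zero hn
    have h1 := algebraMap_det_mulLeft f a
    rw [← hf, ← map_pow] at h1
    have h2 := (algebraMap E _).injective h1
    rw [det_mulLeft_end, hn', mul_comm, pow_mul] at h2
    have h3 := congrArg normalizedAbs h2
    rw [normalizedAbs_pow, normalizedAbs_pow, normalizedAbs_pow] at h3
    rw [← hd, sq, Nat.sqrt_eq]
    exact ((pow_left_inj₀ (normalizedAbs_nonneg _) (pow_nonneg (normalizedAbs_nonneg _) _)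
      Module.finrank_pos.ne').1 h3).symm

end Endomorphisms

end Kudla

namespace Kudla

open scoped TensorProduct Matrix

set_option linter.unusedSectionVars false

section Frame

variable {F W : Type*} [Field F] [AddCommGroup W] [Module F W] [Module.Finite F W]

/-- A maximal isotropic subspace of a symplectic space has adapted coordinates. -/
theorem exists_frame [CharZero F] [ValuativeRel F] [TopologicalSpace F]
    [IsNonarchimedeanLocalField F] [TopologicalSpace W] [IsModuleTopology F W]
    {B : W →ₗ[F] W →ₗ[F] F} (hskew : ∀ w w', B w w' = -B w' w)
    (hnd : ∀ w, (∀ w', B w w' = 0) → w = 0) {L : Submodule F W}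
    (hiso : ∀ w ∈ L, ∀ w' ∈ L, B w w' = 0)
    (hdim : Module.finrank F W = 2 * Module.finrank F L) :
    Nonempty (Frame B L (Fin (Module.finrank F L))) := by
  let b := Module.finBasis F L
  let y : W →ₗ[F] (Fin (Module.finrank F L) → F) := LinearMap.pi fun i => B (b i : W)
  have hflip : Function.Surjective B.flip := by
    refine (LinearMap.injective_iff_surjective_of_finrank_eq_finrank
      Subspace.dual_finrank_eq.symm).1 ?_
    rw [← LinearMap.ker_eq_bot, LinearMap.ker_eq_bot']
    intro w hw
    refine hnd w fun w' => ?_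
    rw [hskew]
    simpa using LinearMap.congr_fun hw w'
  have hsurj : Function.Surjective y := by
    intro t
    obtain ⟨g, hg⟩ := LinearMap.exists_extend (b.constr F t)
    obtain ⟨w, hw⟩ := hflip g
    refine ⟨w, funext fun i => ?_⟩
    have h1 := LinearMap.congr_fun hw (b i : W)
    have h2 := LinearMap.congr_fun hg (b i)
    rw [Module.Basis.constr_basis] at h2
    exact h1.trans h2
  have hker : L = LinearMap.ker y := by
    refine Submodule.eq_of_le_of_finrank_eq (fun w hw => ?_) ?_
    · rw [LinearMap.mem_ker]
      exact funext fun i => hiso _ (b i).2 w hw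
    · have := LinearMap.finrank_range_add_finrank_ker y
      rw [LinearMap.range_eq_top.2 hsurj, finrank_top, Module.finrank_fin_fun, hdim] at this
      omega
  obtain ⟨s, hs⟩ := y.exists_rightInverse_of_surjective (LinearMap.range_eq_top.2 hsurj)
  refine ⟨{ e := L.subtype ∘ₗ b.equivFun.symm.toLinearMap, y := y, s := s,
            form_e := fun x w => ?_, y_s := fun t => LinearMap.congr_fun hs t,
            mem_iff := fun w => ?_, mem_iff_range := fun w => ?_ }⟩
  · simp [Module.Basis.equivFun_symm_apply, dotProduct, y]
  · conv_lhs => rw [hker]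
    exact LinearMap.mem_ker
  · constructor
    · intro hw
      exact ⟨b.equivFun ⟨w, hw⟩, by simp⟩
    · rintro ⟨x, rfl⟩
      exact Subtype.coe_prop _

end Frame

section TensorCoordinates

variable {F D : Type*} [Field F] [CharZero F] [DivisionRing D] [Algebra F D] [StarRing D]
  [IsTypeI F D] {ε ε' : ℤˣ}
  {U : Type*} [AddCommGroup U] [Module F U] [Module Dᵐᵒᵖ U] [IsScalarTower F Dᵐᵒᵖ U]
  {V : Type*} [AddCommGroup V] [Module F V] [Module D V] [IsScalarTower F D V]

theorem finite_of_isTypeI (F D : Type*) [Field F] [DivisionRing D] [Algebra F D] [StarRing D]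
    [h : IsTypeI F D] : Module.Finite F D := by
  apply Module.finite_of_finrank_pos
  rcases h.cases with h | h | h <;> omega

theorem dtmul_balanced (u : U) (a : D) (v : V) :
    dtmul F D (MulOpposite.op a • u) v = dtmul F D u (a • v) :=
  (Submodule.Quotient.eq _).2 (Submodule.subset_span ⟨u, a, v, rfl⟩)

variable (F D U V) in
/-- The pure tensor as a bilinear map. -/
noncomputable def dtmulLin : U →ₗ[F] V →ₗ[F] DTensor F D U V :=
  (TensorProduct.mk F U V).compr₂ (balancing F D U V).mkQ

theorem dtmulLin_apply (u : U) (v : V) : dtmulLin F D U V u v = dtmul F D u v := rfl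

variable {m : ℕ} (b : Module.Basis (Fin m) D V)

/-- The coordinates of a pure tensor. -/
noncomputable def coordLin : U →ₗ[F] V →ₗ[F] (Fin m → U) :=
  LinearMap.mk₂ F (fun u v i => MulOpposite.op (b.repr v i) • u)
    (fun u u' v => funext fun i => smul_add _ _ _)
    (fun c u v => funext fun i => smul_comm _ _ _)
    (fun u v v' => funext fun i => by simp [add_smul])
    (fun c u v => funext fun i => by
      rw [← algebraMap_smul D c v, map_smul, Finsupp.smul_apply, smul_eq_mul,
        ← Algebra.smul_def, MulOpposite.op_smul, smul_assoc, Pi.smul_apply])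

theorem coordLin_apply (u : U) (v : V) (i : Fin m) :
    coordLin (F := F) b u v i = MulOpposite.op (b.repr v i) • u := rfl

/-- A basis of `V` identifies `U ⊗_D V` with a power of `U`. -/
noncomputable def tensorCoord : DTensor F D U V ≃ₗ[F] (Fin m → U) :=
  LinearEquiv.ofLinearMap
    ((balancing F D U V).liftQ (TensorProduct.lift (coordLin b)) (by
      rw [balancing, Submodule.span_le]
      rintro _ ⟨u, a, v, rfl⟩
      rw [SetLike.mem_coe, LinearMap.mem_ker, map_sub, sub_eq_zero, TensorProduct.lift.tmul,
        TensorProduct.lift.tmul]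
      ext i
      rw [coordLin_apply, coordLin_apply, map_smul, Finsupp.smul_apply, smul_eq_mul,
        MulOpposite.op_mul, mul_smul]))
    (∑ i, (dtmulLin F D U V).flip (b i) ∘ₗ LinearMap.proj i)
    (by
      refine LinearMap.pi_ext fun i u => ?_
      rw [LinearMap.comp_apply, LinearMap.sum_apply, Finset.sum_eq_single i]
      · ext j
        change MulOpposite.op (b.repr (b i) j) • (Pi.single i u : Fin m → U) i = _
        rw [Pi.single_eq_same, Module.Basis.repr_self, LinearMap.id_apply]
        rcases eq_or_ne i j with rfl | hij
        · simp
        · rw [Finsupp.single_eq_of_ne hij.symm, Pi.single_eq_of_ne hij.symm]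
          simp
      · intro j _ hj
        rw [LinearMap.comp_apply, LinearMap.proj_apply, Pi.single_eq_of_ne hj, map_zero]
      · simp)
    (by
      refine LinearMap.ext fun w => ?_
      induction w using DTensor.induction with
      | h0 => simp only [map_zero]
      | h2 x y hx hy => rw [map_add, map_add, hx, hy]
      | h1 u v =>
        rw [LinearMap.comp_apply, LinearMap.sum_apply, LinearMap.id_apply]
        change ∑ i, dtmul F D (MulOpposite.op (b.repr v i) • u) (b i) = _
        rw [Finset.sum_congr rfl fun i _ =>
          (dtmul_balanced u (b.repr v i) (b i)).trans (dtmulLin_apply _ _).symm, ← map_sum,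
          b.sum_repr]
        rfl)

theorem tensorCoord_dtmul (u : U) (v : V) (i : Fin m) :
    tensorCoord (F := F) b (dtmul F D u v) i = MulOpposite.op (b.repr v i) • u := rfl

theorem tensorCoord_symm_apply (x : Fin m → U) :
    (tensorCoord (F := F) b).symm x = ∑ i, dtmul F D (x i) (b i) := by
  change (∑ i, (dtmulLin F D U V).flip (b i) ∘ₗ LinearMap.proj i) x = _
  rw [LinearMap.sum_apply]
  rfl

theorem sum_tensorCoord (w : DTensor F D U V) :
    ∑ i, dtmul F D (tensorCoord b w i) (b i) = w := by
  rw [← tensorCoord_symm_apply (F := F), LinearEquiv.symm_apply_apply]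

theorem tensorCoord_tensorMap (g : U →ₗ[Dᵐᵒᵖ] U) (w : DTensor F D U V) (i : Fin m) :
    tensorCoord b (tensorMap F V g w) i = g (tensorCoord b w i) := by
  induction w using DTensor.induction with
  | h0 => simp only [map_zero, Pi.zero_apply]
  | h2 x y hx hy => simp only [map_add, Pi.add_apply, hx, hy]
  | h1 u v => rw [tensorMap_dtmul, tensorCoord_dtmul, tensorCoord_dtmul, map_smul]

theorem mem_subTensor_iff (X : Submodule Dᵐᵒᵖ U) (w : DTensor F D U V) :
    w ∈ subTensor (F := F) V X ↔ ∀ i, tensorCoord b w i ∈ X := by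
  constructor
  · intro hw i
    induction hw using Submodule.span_induction with
    | mem w h =>
      obtain ⟨x, hx, v, rfl⟩ := h
      exact X.smul_mem _ hx
    | zero => rw [map_zero]; exact X.zero_mem
    | add x y _ _ hx hy => rw [map_add]; exact X.add_mem hx hy
    | smul c x _ hx =>
      rw [map_smul, Pi.smul_apply, ← algebraMap_smul Dᵐᵒᵖ c]
      exact X.smul_mem _ hx
  · intro h
    rw [← sum_tensorCoord b w]
    exact Submodule.sum_mem _ fun i _ => Submodule.subset_span ⟨_, h i, _, rfl⟩

/-- A basis of `V` identifies `X ⊗_D V` with a power of `X`. -/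
noncomputable def subTensorCoord (X : Submodule Dᵐᵒᵖ U) : subTensor (F := F) V X ≃ₗ[F] (Fin m → X) where
  toFun w i := ⟨tensorCoord b (w : DTensor F D U V) i, by
    exact (mem_subTensor_iff (F := F) b X (w : DTensor F D U V)).1 w.2 i⟩
  invFun x := ⟨(tensorCoord (F := F) b).symm fun i => x i, (mem_subTensor_iff b X _).2 fun i => by
    rw [LinearEquiv.apply_symm_apply]; exact (x i).2⟩
  map_add' x y := by ext i; simp
  map_smul' c x := by ext i; simp
  left_inv w := by ext1; simp
  right_inv x := by ext i; simp

theorem det_subTensor [Module.Finite Dᵐᵒᵖ U] [Module.Finite D V] (X : Submodule Dᵐᵒᵖ U)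
    (g : U →ₗ[Dᵐᵒᵖ] U) (hg : ∀ x ∈ X, g x ∈ X)
    (hg' : ∀ w ∈ subTensor (F := F) V X, tensorMap F V g w ∈ subTensor (F := F) V X) :
    LinearMap.det ((tensorMap F V g).restrict hg')
      = LinearMap.det ((g.restrict hg).restrictScalars F) ^ Module.finrank D V := by
  have := finite_of_isTypeI F D
  have : Module.Finite F Dᵐᵒᵖ := Module.Finite.equiv (MulOpposite.opLinearEquiv F (M := D))
  have : Module.Finite F X := Module.Finite.trans Dᵐᵒᵖ X
  let b := Module.finBasis D V
  have h := LinearMap.det_pi (ι := Fin (Module.finrank D V))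
    fun _ => ((g.restrict hg).restrictScalars F)
  rw [Finset.prod_const, Finset.card_univ, Fintype.card_fin] at h
  rw [← h, ← LinearMap.det_conj _ (subTensorCoord (F := F) b X)]
  congr 1
  refine LinearMap.ext fun x => ?_
  obtain ⟨w, rfl⟩ := (subTensorCoord (F := F) b X).surjective x
  rw [LinearMap.comp_apply, LinearMap.comp_apply, LinearEquiv.coe_coe, LinearEquiv.coe_coe,
    LinearEquiv.symm_apply_apply]
  ext i
  exact tensorCoord_tensorMap b g (w : DTensor F D U V) i

theorem finrank_subTensor [Module.Finite Dᵐᵒᵖ U] [Module.Finite D V] (X : Submodule Dᵐᵒᵖ U) :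
    Module.finrank F (subTensor (F := F) V X)
      = Module.finrank D V * (Module.finrank F D * Module.finrank Dᵐᵒᵖ X) := by
  have := finite_of_isTypeI F D
  have : Module.Finite F Dᵐᵒᵖ := Module.Finite.equiv (MulOpposite.opLinearEquiv F (M := D))
  have : Module.Finite F X := Module.Finite.trans Dᵐᵒᵖ X
  rw [(subTensorCoord (F := F) (Module.finBasis D V) X).finrank_eq, Module.finrank_pi_fintype,
    Finset.sum_const, Finset.card_univ, Fintype.card_fin, smul_eq_mul,
    (MulOpposite.opLinearEquiv F (M := D)).finrank_eq, Module.finrank_mul_finrank]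

theorem finrank_dTensor [Module.Finite Dᵐᵒᵖ U] [Module.Finite D V] :
    Module.finrank F (DTensor F D U V)
      = Module.finrank D V * (Module.finrank F D * Module.finrank Dᵐᵒᵖ U) := by
  have := finite_of_isTypeI F D
  have : Module.Finite F Dᵐᵒᵖ := Module.Finite.equiv (MulOpposite.opLinearEquiv F (M := D))
  have : Module.Finite F U := Module.Finite.trans Dᵐᵒᵖ U
  rw [(tensorCoord (F := F) (U := U) (Module.finBasis D V)).finrank_eq, Module.finrank_pi_fintype,
    Finset.sum_const, Finset.card_univ, Fintype.card_fin, smul_eq_mul,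
    (MulOpposite.opLinearEquiv F (M := D)).finrank_eq, Module.finrank_mul_finrank]

theorem finite_dTensor [Module.Finite Dᵐᵒᵖ U] [Module.Finite D V] :
    Module.Finite F (DTensor F D U V) := by
  have := finite_of_isTypeI F D
  have : Module.Finite F Dᵐᵒᵖ := Module.Finite.equiv (MulOpposite.opLinearEquiv F (M := D))
  have : Module.Finite F U := Module.Finite.trans Dᵐᵒᵖ U
  exact Module.Finite.equiv (tensorCoord (F := F) (U := U) (Module.finBasis D V)).symm

end TensorCoordinates

section TensorForm

variable {F D : Type*} [Field F] [CharZero F] [DivisionRing D] [Algebra F D] [StarRing D]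
  [IsTypeI F D] {ε ε' : ℤˣ}
  {U : Type*} [AddCommGroup U] [Module F U] [Module Dᵐᵒᵖ U] [IsScalarTower F Dᵐᵒᵖ U]
  {V : Type*} [AddCommGroup V] [Module F V] [Module D V] [IsScalarTower F D V]

theorem tensorForm_dtmul_eq (hU : RightHermitianForm F D ε U) (hV : LeftHermitianForm F D ε' V)
    (u u' : U) (v v' : V) :
    tensorForm hU hV (dtmul F D u v) (dtmul F D u' v')
      = halfTrace F D (hU.form u u' * star (hV.form v v')) := rfl

theorem halfTrace_star (x : D) : halfTrace F D (star x) = halfTrace F D x := by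
  apply (algebraMap F D).injective
  rw [algebraMap_halfTrace, algebraMap_halfTrace, star_star, add_comm]

theorem eq_zero_of_halfTrace {x : D} (h : ∀ a, halfTrace F D (a * x) = 0) : x = 0 := by
  by_contra hx
  have h1 := congrArg (algebraMap F D) (h x⁻¹)
  rw [inv_mul_cancel₀ hx, algebraMap_halfTrace, star_one, map_zero, one_add_one_eq_two,
    ← map_ofNat (algebraMap F D) 2, ← map_mul, inv_mul_cancel₀ two_ne_zero, map_one] at h1
  exact one_ne_zero h1

theorem tensorForm_skew (hU : RightHermitianForm F D ε U) (hV : LeftHermitianForm F D (-ε) V)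
    (w w' : DTensor F D U V) : tensorForm hU hV w w' = -tensorForm hU hV w' w := by
  induction w using DTensor.induction with
  | h0 => simp only [map_zero, LinearMap.zero_apply, neg_zero]
  | h2 x y hx hy => simp only [map_add, LinearMap.add_apply, hx, hy, neg_add]
  | h1 u v =>
    induction w' using DTensor.induction with
    | h0 => simp only [map_zero, LinearMap.zero_apply, neg_zero]
    | h2 x y hx hy => simp only [map_add, LinearMap.add_apply, hx, hy, neg_add]
    | h1 u' v' =>
      rw [tensorForm_dtmul_eq, tensorForm_dtmul_eq, hU.form_symm u' u, hV.form_symm v' v,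
        ← map_neg, star_units_smul, star_star, ← halfTrace_star (F := F), star_mul, star_star,
        halfTrace_mul_comm]
      congr 1
      rcases Int.units_eq_one_or ε with rfl | rfl <;> simp [Units.smul_def]

theorem exists_dual_vector (hV : LeftHermitianForm F D ε' V) [Module.Finite D V] {m : ℕ}
    (b : Module.Basis (Fin m) D V) (t : Fin m → D) : ∃ v', ∀ i, hV.form (b i) v' = t i := by
  have := finite_of_isTypeI F D
  have : Module.Finite F V := Module.Finite.trans D V
  let Φ : V →ₗ[F] (V →ₗ[D] D) :=
    { toFun := fun v' =>
        { toFun := fun v => hV.form v v'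
          map_add' := fun v w => by rw [map_add, LinearMap.add_apply]
          map_smul' := fun a v => hV.smul_form v v' a }
      map_add' := fun v w => by ext; simp
      map_smul' := fun c v => by ext; simp }
  have hΦ : Function.Injective Φ := by
    rw [← LinearMap.ker_eq_bot, LinearMap.ker_eq_bot']
    intro v hv
    refine hV.nondegenerate v fun v' => ?_
    rw [hV.form_symm, show hV.form v' v = 0 from LinearMap.congr_fun hv v', star_zero, smul_zero]
  have hfin : Module.Finite F (V →ₗ[D] D) := Module.Finite.equiv (b.constr F (M' := D))
  have hdim : Module.finrank F V = Module.finrank F (V →ₗ[D] D) := by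
    rw [← (b.constr F (M' := D)).finrank_eq, Module.finrank_pi_fintype, Finset.sum_const,
      Finset.card_univ, smul_eq_mul, ← Module.finrank_mul_finrank F D V,
      Module.finrank_eq_card_basis b, mul_comm]
  obtain ⟨v', hv'⟩ := (LinearMap.injective_iff_surjective_of_finrank_eq_finrank hdim).1 hΦ
    (b.constr F t)
  exact ⟨v', fun i => (LinearMap.congr_fun hv' (b i)).trans (b.constr_basis F t i)⟩

theorem tensorForm_nondegenerate (hU : RightHermitianForm F D ε U)
    (hV : LeftHermitianForm F D ε' V) [Module.Finite D V] (w : DTensor F D U V)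
    (hw : ∀ w', tensorForm hU hV w w' = 0) : w = 0 := by
  let b := Module.finBasis D V
  suffices h : ∀ j, tensorCoord (F := F) b w j = 0 by
    rw [← (tensorCoord (F := F) b).map_eq_zero_iff]
    exact funext h
  intro j
  refine hU.nondegenerate _ fun u' => ?_
  obtain ⟨v', hv'⟩ := exists_dual_vector hV b (Pi.single j 1)
  refine eq_zero_of_halfTrace (F := F) fun a => ?_
  have h1 := hw (dtmul F D (MulOpposite.op a • u') v')
  rw [← sum_tensorCoord b w, map_sum, LinearMap.sum_apply, Finset.sum_eq_single j] at h1
  · rwa [tensorForm_dtmul_eq, hv', Pi.single_eq_same, star_one, mul_one, hU.form_smul,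
      halfTrace_mul_comm] at h1
  · intro i _ hi
    rw [tensorForm_dtmul_eq, hv', Pi.single_eq_of_ne hi, star_zero, mul_zero, map_zero]
  · simp

theorem tensorForm_isotropic (hU : RightHermitianForm F D ε U)
    (hV : LeftHermitianForm F D ε' V) {X : Submodule Dᵐᵒᵖ U} (hX : IsTotallyIsotropic hU X)
    (w : DTensor F D U V) (hw : w ∈ subTensor (F := F) V X) (w' : DTensor F D U V)
    (hw' : w' ∈ subTensor (F := F) V X) : tensorForm hU hV w w' = 0 := by
  induction hw using Submodule.span_induction with
  | zero => simp
  | add x y _ _ hx hy => rw [map_add, LinearMap.add_apply, hx, hy, add_zero]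
  | smul c x _ hx => rw [map_smul, LinearMap.smul_apply, hx, smul_zero]
  | mem w h =>
    obtain ⟨x, hx, v, rfl⟩ := h
    induction hw' using Submodule.span_induction with
    | zero => simp
    | add x y _ _ hx hy => rw [map_add, hx, hy, add_zero]
    | smul c x _ hx => rw [map_smul, hx, smul_zero]
    | mem w h =>
      obtain ⟨x', hx', v', rfl⟩ := h
      rw [tensorForm_dtmul_eq, hX x hx x' hx', zero_mul, map_zero]

end TensorForm

end Kudla

namespace Kudla

open scoped TensorProduct Matrix NNReal
open Topology

set_option linter.unusedSectionVars false

theorem exists_apply_eq_one {S : Type*} [AddCommGroup S] [Module ℂ S] {l : Module.Dual ℂ S}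
    (hl : l ≠ 0) : ∃ φ, l φ = 1 := by
  obtain ⟨φ, hφ⟩ : ∃ φ, l φ ≠ 0 := by
    by_contra! h
    exact hl (LinearMap.ext h)
  exact ⟨(l φ)⁻¹ • φ, by rw [map_smul, smul_eq_mul, inv_mul_cancel₀ hφ]⟩

section SiegelAbs

variable {F : Type*} [Field F] [CharZero F] [ValuativeRel F] [TopologicalSpace F]
  [IsNonarchimedeanLocalField F] {D : Type*} [DivisionRing D] [Algebra F D] [StarRing D]
  [IsTypeI F D] {E : Type*} [Field E] [Algebra F E] [Algebra E D] [IsScalarTower F E D]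
  [Algebra.IsCentral E D] [TopologicalSpace E] [IsModuleTopology F E]
  [IsTopologicalRing E] [LocallyCompactSpace E]
  {ε : ℤˣ} {U : Type*} [AddCommGroup U] [Module F U] [Module E U] [Module Dᵐᵒᵖ U]
  [IsScalarTower F Dᵐᵒᵖ U] [IsScalarTower E Dᵐᵒᵖ U] [Module.Finite Dᵐᵒᵖ U]
  (hU : RightHermitianForm F D ε U) (X : Submodule Dᵐᵒᵖ U)

theorem siegelAbs_eq (g : siegelParabolic hU X) :
    siegelAbs E hU X g
      = normalizedAbs (LinearMap.det ((restrictTo hU X g).restrictScalars F)) := by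
  have := finite_of_isTypeI F D
  have hFE : Module.Finite F E := Module.Finite.of_injective
    (IsScalarTower.toAlgHom F E D).toLinearMap (algebraMap E D).injective
  have : Module.Finite E D := Module.Finite.of_restrictScalars_finite F E D
  have : Module.Finite E Dᵐᵒᵖ := Module.Finite.equiv (MulOpposite.opLinearEquiv E (M := D))
  have : CharZero E := charZero_of_injective_algebraMap (algebraMap F E).injective
  have : IsScalarTower F E U := ⟨fun c e u => by
    have h1 := algebraMap_smul Dᵐᵒᵖ (c • e) u
    have h2 : algebraMap E Dᵐᵒᵖ (algebraMap F E c) = algebraMap F Dᵐᵒᵖ c :=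
      congrArg MulOpposite.op (IsScalarTower.algebraMap_apply F E D c).symm
    rw [Algebra.smul_def c e, map_mul, h2, mul_smul, algebraMap_smul, algebraMap_smul] at h1
    rw [Algebra.smul_def, h1]⟩
  have : IsScalarTower F E X := ⟨fun c e x => Subtype.ext (smul_assoc c e (x : U))⟩
  have : Module.Finite E X := Module.Finite.trans Dᵐᵒᵖ X
  rw [siegelAbs, csaDegree, (MulOpposite.opLinearEquiv E (M := D)).finrank_eq,
    normalizedAbs_reducedNorm, normalizedAbs_eq_norm (F := F), ← LinearMap.det_restrictScalars]
  rfl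

theorem siegelAbs_pos (g : siegelParabolic hU X) : 0 < siegelAbs E hU X g := by
  have := finite_of_isTypeI F D
  have : Module.Finite F Dᵐᵒᵖ := Module.Finite.equiv (MulOpposite.opLinearEquiv F (M := D))
  have : Module.Finite F X := Module.Finite.trans Dᵐᵒᵖ X
  rw [siegelAbs_eq (F := F)]
  refine normalizedAbs_pos ?_
  have hinj : Function.Injective ((restrictTo hU X g).restrictScalars F) := fun x y hxy =>
    Subtype.ext (((g : isometryGroup hU) : U ≃ₗ[Dᵐᵒᵖ] U).injective (congrArg Subtype.val hxy))
  exact (LinearEquiv.isUnit_det' (LinearEquiv.ofInjectiveEndo _ hinj)).ne_zero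

theorem siegelAbs_mul (g g' : siegelParabolic hU X) :
    siegelAbs E hU X (g * g') = siegelAbs E hU X g * siegelAbs E hU X g' := by
  rw [siegelAbs_eq (F := F), siegelAbs_eq (F := F), siegelAbs_eq (F := F), ← normalizedAbs_mul,
    ← map_mul]
  rfl

theorem siegelAbs_one : siegelAbs E hU X 1 = 1 := by
  rw [siegelAbs_eq (F := F), ← normalizedAbs_one (E := F)]
  congr 1
  exact LinearMap.det_id

end SiegelAbs

section Oscillator

variable {F : Type*} [Field F] [CharZero F] [ValuativeRel F] [TopologicalSpace F]
  [IsNonarchimedeanLocalField F] {D : Type*} [DivisionRing D] [Algebra F D] [StarRing D]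
  [IsTypeI F D] {ψ : AddChar F Circle}
  {ε : ℤˣ} {U : Type*} [AddCommGroup U] [Module F U] [Module Dᵐᵒᵖ U]
  [IsScalarTower F Dᵐᵒᵖ U] [Module.Finite Dᵐᵒᵖ U]
  {hU : RightHermitianForm F D ε U}
  {Gb : Type*} [Group Gb] [TopologicalSpace Gb] {p : Gb →* isometryGroup hU}
  {V : Type*} [AddCommGroup V] [Module F V] [Module D V] [IsScalarTower F D V]
  [Module.Finite D V] {hV : LeftHermitianForm F D (-ε) V}
  {S : Type*} [AddCommGroup S] [Module ℂ S]
  {ω : Representation ℂ (Jacobi hU hV p) S}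

/-- The operators attached to the vectors of `U ⊗_D V`. -/
noncomputable def weylOp (ω : Representation ℂ (Jacobi hU hV p) S) (w : DTensor F D U V) :
    Module.End ℂ S := ω (SemidirectProduct.inl ⟨w, 0⟩)

/-- A unitary character, as a character with values in `ℂ`. -/
noncomputable def complexChar (ψ : AddChar F Circle) : AddChar F ℂ := Circle.coeHom.compAddChar ψ

theorem complexChar_apply (t : F) : complexChar ψ t = (ψ t : ℂ) := rfl

theorem isWeylSystem [TopologicalSpace (DTensor F D U V)] [h : IsModuleTopology F (DTensor F D U V)]
    (hψ : ψ ≠ 1) (hω : IsEnhancedOscillator ψ hU hV p ω) :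
    IsWeylSystem (complexChar ψ) (tensorForm hU hV) (weylOp ω) := by
  have hirr := hω.irreducible
  have hsplit : ∀ (w : DTensor F D U V) (t : F) (φ : S),
      ω (SemidirectProduct.inl ⟨w, t⟩) φ = (ψ t : ℂ) • weylOp ω w φ := by
    intro w t φ
    have h1 : (⟨w, t⟩ : Heisenberg (tensorForm hU hV)) = ⟨0, t⟩ * ⟨w, 0⟩ := by
      simp [Heisenberg.mul_def]
    rw [h1, map_mul, map_mul, Module.End.mul_apply, hω.central_char]
    rfl
  have hnt : Nontrivial S := by
    by_contra hS
    rw [not_nontrivial_iff_subsingleton] at hS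
    obtain ⟨N, N', hNN⟩ := hirr.exists_pair_ne
    apply hNN
    ext φ
    rw [Subsingleton.elim φ 0]
    exact iff_of_true N.toSubmodule.zero_mem N'.toSubmodule.zero_mem
  refine ⟨fun h1 => hψ ?_, tensorForm_skew hU hV, hnt, ?_, fun w w' φ => ?_, fun N hN => ?_,
    fun φ => ?_, ?_⟩
  · ext t
    exact DFunLike.congr_fun h1 t
  · exact (congrArg ω (map_one SemidirectProduct.inl)).trans (map_one ω)
  · rw [complexChar_apply, ← hsplit]
    change (ω _ * ω _) φ = _
    rw [← map_mul, ← map_mul, Heisenberg.mul_def]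
    simp
  · let N' : Subrepresentation (ω.comp SemidirectProduct.inl :
        Representation ℂ (Heisenberg (tensorForm hU hV)) S) :=
      { toSubmodule := N
        apply_mem_toSubmodule := fun a φ hφ => by
          change ω (SemidirectProduct.inl ⟨a.vec, a.scal⟩) φ ∈ N
          rw [hsplit]
          exact N.smul_mem _ (hN _ _ hφ) }
    rcases hirr.eq_bot_or_eq_top N' with h1 | h1
    · exact Or.inl (congrArg Subrepresentation.toSubmodule h1)
    · exact Or.inr (congrArg Subrepresentation.toSubmodule h1)
  · obtain rfl := h.eq_moduleTopology'
    let := moduleTopology F (DTensor F D U V)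
    have hc : Continuous fun w : DTensor F D U V =>
        ((⟨w, 0⟩ : Heisenberg (tensorForm hU hV)), (1 : Gb)) := by
      refine Continuous.prodMk ?_ continuous_const
      exact continuous_induced_rng.2 (continuous_id.prodMk continuous_const)
    have := (hω.smooth φ).preimage hc
    refine this.mem_nhds ?_
    exact LinearMap.congr_fun ((congrArg ω (map_one SemidirectProduct.inl)).trans (map_one ω)) φ
  · obtain ⟨φ, hφ⟩ := exists_ne (0 : S)
    have hc : Continuous fun t : F =>
        ((⟨0, t⟩ : Heisenberg (tensorForm hU hV)), (1 : Gb)) := by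
      refine Continuous.prodMk ?_ continuous_const
      refine continuous_induced_rng.2 ?_
      let := moduleTopology F (DTensor F D U V)
      exact continuous_const.prodMk continuous_id
    have := (hω.smooth φ).preimage hc
    refine Filter.mem_of_superset (this.mem_nhds ?_) fun t ht => ?_
    · exact LinearMap.congr_fun ((congrArg ω (map_one SemidirectProduct.inl)).trans (map_one ω)) φ
    · have h1 : ω (SemidirectProduct.inl ⟨0, t⟩) φ = φ := ht
      rw [hω.central_char] at h1
      have h2 : ((ψ t : ℂ) - 1) • φ = 0 := by rw [sub_smul, one_smul, h1, sub_self]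
      exact sub_eq_zero.1 ((smul_eq_zero.1 h2).resolve_right hφ)

/-- The action of an element of `G(U)` on `U ⊗_D V`. -/
noncomputable def tensorEquiv (hV : LeftHermitianForm F D (-ε) V) (g : isometryGroup hU) :
    DTensor F D U V ≃ₗ[F] DTensor F D U V :=
  LinearEquiv.ofBijective (tensorMap F V (g : U ≃ₗ[Dᵐᵒᵖ] U).toLinearMap) (by
    have h := (isometryAct hU hV g).bijective
    refine ⟨fun w w' hww => ?_, fun w => ?_⟩
    · have := h.1 (a₁ := ⟨w, 0⟩) (a₂ := ⟨w', 0⟩) (Heisenberg.ext hww rfl)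
      exact congrArg Heisenberg.vec this
    · obtain ⟨a, ha⟩ := h.2 ⟨w, 0⟩
      exact ⟨a.vec, congrArg Heisenberg.vec ha⟩)

theorem weylOp_comm (ω : Representation ℂ (Jacobi hU hV p) S) (h : Gb) (w : DTensor F D U V)
    (φ : S) : ω (SemidirectProduct.inr h) (weylOp ω w φ)
      = weylOp ω (tensorEquiv hV (p h) w) (ω (SemidirectProduct.inr h) φ) := by
  have h1 : (SemidirectProduct.inr h * SemidirectProduct.inl ⟨w, 0⟩ : Jacobi hU hV p)
      = SemidirectProduct.inl ⟨tensorEquiv hV (p h) w, 0⟩ * SemidirectProduct.inr h := by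
    have h2 := SemidirectProduct.inl_aut (φ := (isometryAct hU hV).comp p) h ⟨w, 0⟩
    change _ = SemidirectProduct.inl ((isometryAct hU hV).comp p h ⟨w, 0⟩) * _
    rw [h2, mul_assoc, ← map_mul, inv_mul_cancel, map_one, mul_one]
  have h3 := congrArg ω h1
  rw [map_mul, map_mul] at h3
  exact LinearMap.congr_fun h3 φ

theorem tensorEquiv_mem {X : Submodule Dᵐᵒᵖ U} {g : isometryGroup hU}
    (hg : g ∈ siegelParabolic hU X) (w : DTensor F D U V) (hw : w ∈ subTensor (F := F) V X) :
    tensorEquiv hV g w ∈ subTensor (F := F) V X := by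
  rw [mem_subTensor_iff (Module.finBasis D V)] at hw ⊢
  intro i
  change tensorCoord _ (tensorMap F V _ w) i ∈ X
  rw [tensorCoord_tensorMap]
  exact (hg _).2 (hw i)

theorem exists_frame_subTensor [TopologicalSpace (DTensor F D U V)]
    [IsModuleTopology F (DTensor F D U V)] (hV : LeftHermitianForm F D (-ε) V)
    {X : Submodule Dᵐᵒᵖ U} (hX : IsLagrangian hU X) :
    ∃ n, Nonempty (Frame (tensorForm hU hV) (subTensor (F := F) V X) (Fin n)) := by
  have := finite_dTensor (F := F) (D := D) (U := U) (V := V)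
  refine ⟨_, exists_frame (tensorForm_skew hU hV) (tensorForm_nondegenerate hU hV)
    (tensorForm_isotropic hU hV hX.1) ?_⟩
  rw [finrank_dTensor, finrank_subTensor, hX.2]
  ring

variable {E : Type*} [Field E] [Algebra F E] [Algebra E D] [IsScalarTower F E D]
  [Algebra.IsCentral E D] [TopologicalSpace E] [IsModuleTopology F E]
  [IsTopologicalRing E] [LocallyCompactSpace E] [Module E U] [IsScalarTower E Dᵐᵒᵖ U]

variable (E V) in
/-- The factor `|h|_X ^ (dim V / 2)`. -/
noncomputable def siegelFactor (p : Gb →* isometryGroup hU) (X : Submodule Dᵐᵒᵖ U)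
    (h : siegelCover p X) : ℝ :=
  siegelAbs E hU X ⟨p h, h.2⟩ ^ ((Module.finrank D V : ℝ) / 2)

theorem siegelFactor_pos (X : Submodule Dᵐᵒᵖ U) (h : siegelCover p X) :
    0 < siegelFactor V E p X h := Real.rpow_pos_of_pos (siegelAbs_pos hU X _) _

theorem siegelFactor_sq (X : Submodule Dᵐᵒᵖ U) (h : siegelCover p X) :
    siegelFactor V E p X h ^ 2 = siegelAbs E hU X ⟨p h, h.2⟩ ^ Module.finrank D V := by
  rw [siegelFactor, ← Real.rpow_natCast, ← Real.rpow_mul (siegelAbs_pos hU X _).le,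
    ← Real.rpow_natCast]
  congr 1
  push_cast
  ring

variable (E V) in
/-- The factor `|h|_X ^ (dim V / 2)` as a homomorphism. -/
noncomputable def siegelFactorHom (p : Gb →* isometryGroup hU) (X : Submodule Dᵐᵒᵖ U) :
    siegelCover p X →* ℂ where
  toFun h := (siegelFactor V E p X h : ℝ)
  map_one' := by
    rw [siegelFactor, show (⟨p ((1 : siegelCover p X) : Gb), (1 : siegelCover p X).2⟩ :
      siegelParabolic hU X) = 1 from Subtype.ext (map_one p), siegelAbs_one, Real.one_rpow,
      Complex.ofReal_one]
  map_mul' h h' := by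
    rw [siegelFactor, siegelFactor, siegelFactor, show (⟨p ((h * h' : siegelCover p X) : Gb),
      (h * h').2⟩ : siegelParabolic hU X) = ⟨p h, h.2⟩ * ⟨p h', h'.2⟩ from
      Subtype.ext (map_mul p _ _), siegelAbs_mul, Real.mul_rpow (siegelAbs_pos hU X _).le
      (siegelAbs_pos hU X _).le, Complex.ofReal_mul]

/-- The Kudla character exists and is unique. -/
theorem existsUnique_kudlaCharacter (hψ : ψ ≠ 1) (hω : IsEnhancedOscillator ψ hU hV p ω)
    {X : Submodule Dᵐᵒᵖ U} (hX : IsLagrangian hU X) : ∃! κ, IsKudlaCharacter E ω X κ := by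
  let : TopologicalSpace (DTensor F D U V) := moduleTopology F _
  have : IsModuleTopology F (DTensor F D U V) := ⟨rfl⟩
  have hρ := isWeylSystem hψ hω
  obtain ⟨n, ⟨f⟩⟩ := exists_frame_subTensor hV hX
  obtain ⟨l, hl0, hl⟩ := hρ.exists_functional f
  obtain ⟨φ₀, hφ₀⟩ := exists_apply_eq_one hl0
  have heig : ∀ (h : siegelCover p X) (φ : S), l (ω (SemidirectProduct.inr (h : Gb)) φ)
      = l (ω (SemidirectProduct.inr (h : Gb)) φ₀) * l φ := by
    intro h
    obtain ⟨c, hc⟩ := hρ.functional_unique f hl0 hl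
      (l' := l ∘ₗ ω (SemidirectProduct.inr (h : Gb))) (fun w hw φ => by
        rw [LinearMap.comp_apply, LinearMap.comp_apply, weylOp_comm, hl _ (tensorEquiv_mem h.2 w hw)])
    have hc' : ∀ φ, l (ω (SemidirectProduct.inr (h : Gb)) φ) = c * l φ := LinearMap.congr_fun hc
    intro φ
    rw [hc', hc' φ₀, hφ₀, mul_one]
  let a : siegelCover p X →* ℂ :=
    { toFun := fun h => l (ω (SemidirectProduct.inr (h : Gb)) φ₀)
      map_one' := by
        rw [OneMemClass.coe_one, map_one, map_one, Module.End.one_apply, hφ₀]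
      map_mul' := fun h h' => by
        rw [Subgroup.coe_mul, map_mul, map_mul, Module.End.mul_apply, heig] }
  have hne : ∀ h : siegelCover p X, (siegelFactor V E p X h : ℂ) ≠ 0 := fun h =>
    Complex.ofReal_ne_zero.2 (siegelFactor_pos X h).ne'
  refine ⟨a.toHomUnits * (siegelFactorHom V E p X).toHomUnits⁻¹, ⟨l, ⟨hl0, hl⟩, fun h φ => ?_⟩, ?_⟩
  · rw [heig h φ]
    congr 1
    change a h = _
    have h1 : ((siegelFactorHom V E p X).toHomUnits h : ℂ) = siegelFactor V E p X h := rfl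
    rw [MonoidHom.mul_apply, MonoidHom.inv_apply, Units.val_mul, Units.val_inv_eq_inv_val, h1]
    change _ = _ * _ * ((siegelFactor V E p X h : ℝ) : ℂ)
    rw [inv_mul_cancel_right₀ (hne h)]
    rfl
  · rintro κ ⟨l', ⟨hl0', hl'⟩, hκ⟩
    ext h
    obtain ⟨c, hc⟩ := hρ.functional_unique f hl0' hl' hl
    have hc0 : c * l' φ₀ = 1 := by rw [← hφ₀, hc]; rfl
    have h2 : a h = κ h * siegelFactor V E p X h := by
      change l (ω (SemidirectProduct.inr (h : Gb)) φ₀) = _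
      rw [hc, LinearMap.smul_apply, hκ, smul_eq_mul, mul_left_comm, hc0, mul_one]
      rfl
    have h1 : ((siegelFactorHom V E p X).toHomUnits h : ℂ) = siegelFactor V E p X h := rfl
    rw [MonoidHom.mul_apply, MonoidHom.inv_apply, Units.val_mul, Units.val_inv_eq_inv_val, h1,
      show (a.toHomUnits h : ℂ) = a h from rfl, h2, mul_inv_cancel_right₀ (hne h)]

theorem det_restrict_congr {W : Type*} [AddCommGroup W] [Module F W] (g : W →ₗ[F] W)
    {M N : Submodule F W} (h : M = N) (hM : ∀ w ∈ M, g w ∈ M) (hN : ∀ w ∈ N, g w ∈ N) :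
    LinearMap.det (g.restrict hM) = LinearMap.det (g.restrict hN) := by
  subst h
  rfl

theorem normalizedAbs_det_tensorEquiv (X : Submodule Dᵐᵒᵖ U) (h : siegelCover p X) :
    normalizedAbs (LinearMap.det ((tensorEquiv hV (p h)).toLinearMap.restrict
      (tensorEquiv_mem (V := V) h.2))) = siegelFactor V E p X h ^ 2 := by
  rw [siegelFactor_sq, siegelAbs_eq (F := F), ← normalizedAbs_pow]
  congr 1
  exact det_subTensor X _ (fun x hx => (h.2 x).2 hx) _

end Oscillator

end Kudla

theorem Kudla.eq_of_reciprocal_ratios {x y d : ℝ} {a b : ℂ} (hx : 0 < x) (hy : 0 < y) (hd : 0 < d)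
    (ha : a ≠ 0) (h1 : b * y * d = a * x * (y ^ 2 : ℝ)) (h2 : a * x * d = b * y * (x ^ 2 : ℝ)) :
    a = b := by
  have hx' : (x : ℂ) ≠ 0 := Complex.ofReal_ne_zero.2 hx.ne'
  have hy' : (y : ℂ) ≠ 0 := Complex.ofReal_ne_zero.2 hy.ne'
  have hd' : (d : ℂ) ≠ 0 := Complex.ofReal_ne_zero.2 hd.ne'
  push_cast at h1 h2
  have h3 : b * d = a * (x * y) := mul_right_cancel₀ hy' (by linear_combination h1)
  have h4 : a * d = b * (x * y) := mul_right_cancel₀ hx' (by linear_combination h2)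
  have h5 : ((d ^ 2 : ℝ) : ℂ) = ((x * y) ^ 2 : ℝ) := by
    push_cast
    exact mul_left_cancel₀ ha (by linear_combination (d : ℂ) * h4 + (x * y : ℂ) * h3)
  have h6 : d = x * y := by
    have := Complex.ofReal_injective h5
    exact (pow_left_inj₀ hd.le (mul_pos hx hy).le two_ne_zero).1 this
  rw [← Complex.ofReal_mul, ← h6] at h3
  exact (mul_right_cancel₀ hd' h3).symm

theorem kudla_characters_agree_on_intersection
    -- `F` is a non-archimedean local field of characteristic zero
    {F : Type*} [Field F] [CharZero F] [ValuativeRel F] [TopologicalSpace F]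
    [IsNonarchimedeanLocalField F]
    -- `D` with its involution `ι = star`
    {D : Type*} [DivisionRing D] [Algebra F D] [StarRing D] [Kudla.IsTypeI F D]
    -- `E` is the center of `D`, with its topology as a finite extension of `F`
    {E : Type*} [Field E] [Algebra F E] [Algebra E D] [IsScalarTower F E D]
    [Algebra.IsCentral E D] [TopologicalSpace E] [IsModuleTopology F E]
    [IsTopologicalRing E] [LocallyCompactSpace E]
    -- `ψ` is a nontrivial unitary character of `F`
    {ψ : AddChar F Circle} (hψ_cont : Continuous ψ) (hψ : ψ ≠ 1)
    -- `U` is a split `ε`-Hermitian right `D`-space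
    {ε : ℤˣ} {U : Type*} [AddCommGroup U] [Module F U] [Module E U] [Module Dᵐᵒᵖ U]
    [IsScalarTower F Dᵐᵒᵖ U] [IsScalarTower E Dᵐᵒᵖ U] [Module.Finite Dᵐᵒᵖ U]
    (hU : Kudla.RightHermitianForm F D ε U) (hsplit : Kudla.IsSplit hU)
    -- `p : Gb → G(U)` is the cover `Ḡ(U) → G(U)`
    {Gb : Type*} [Group Gb] [TopologicalSpace Gb] [IsTopologicalGroup Gb]
    (p : Gb →* Kudla.isometryGroup hU) (hp : Kudla.IsModifiedCover hU p)
    -- `σ = (V, ω)` is an enhanced oscillator representation of `Ḡ(U)`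
    {V : Type*} [AddCommGroup V] [Module F V] [Module D V] [IsScalarTower F D V]
    [Module.Finite D V] (hV : Kudla.LeftHermitianForm F D (-ε) V)
    {S : Type*} [AddCommGroup S] [Module ℂ S]
    (ω : Representation ℂ (Kudla.Jacobi hU hV p) S)
    (hω : Kudla.IsEnhancedOscillator ψ hU hV p ω)
    -- `X` and `Y` are Lagrangian subspaces of `U`
    (X Y : Submodule Dᵐᵒᵖ U)
    (hX : Kudla.IsLagrangian hU X) (hY : Kudla.IsLagrangian hU Y) :
    -- `κ_{σ,X}` and `κ_{σ,Y}` are well defined, and they agree on the intersection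
    (∃! κ, Kudla.IsKudlaCharacter E ω X κ) ∧ (∃! κ, Kudla.IsKudlaCharacter E ω Y κ) ∧
    ∀ (κX : Kudla.siegelCover p X →* ℂˣ) (κY : Kudla.siegelCover p Y →* ℂˣ),
      Kudla.IsKudlaCharacter E ω X κX → Kudla.IsKudlaCharacter E ω Y κY →
      ∀ (h : Gb) (hhX : h ∈ Kudla.siegelCover p X) (hhY : h ∈ Kudla.siegelCover p Y),
        κX ⟨h, hhX⟩ = κY ⟨h, hhY⟩ := by
  refine ⟨Kudla.existsUnique_kudlaCharacter hψ hω hX, Kudla.existsUnique_kudlaCharacter hψ hω hY,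
    ?_⟩
  rintro κX κY ⟨l, ⟨hl0, hl⟩, hκX⟩ ⟨m, ⟨hm0, hm⟩, hκY⟩ h hhX hhY
  let : TopologicalSpace (Kudla.DTensor F D U V) := moduleTopology F _
  have : IsModuleTopology F (Kudla.DTensor F D U V) := ⟨rfl⟩
  have := Kudla.finite_dTensor (F := F) (D := D) (U := U) (V := V)
  have hρ := Kudla.isWeylSystem hψ hω
  obtain ⟨_, ⟨fX⟩⟩ := Kudla.exists_frame_subTensor hV hX
  obtain ⟨_, ⟨fY⟩⟩ := Kudla.exists_frame_subTensor hV hY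
  have hLX := Kudla.tensorEquiv_mem (V := V) (hV := hV) hhX
  have hLY := Kudla.tensorEquiv_mem (V := V) (hV := hV) hhY
  have hXY := hρ.ratio fX fY hl0 hl hm0 hm (Kudla.weylOp_comm ω h) hLX hLY
    (hκX ⟨h, hhX⟩) (hκY ⟨h, hhY⟩)
  have hYX := hρ.ratio fY fX hm0 hm hl0 hl (Kudla.weylOp_comm ω h) hLY hLX
    (hκY ⟨h, hhY⟩) (hκX ⟨h, hhX⟩)
  rw [Kudla.normalizedAbs_det_tensorEquiv (E := E) Y ⟨h, hhY⟩] at hXY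
  have hinf := Kudla.det_restrict_congr (Kudla.tensorEquiv hV (p h)).toLinearMap
    (inf_comm (Kudla.subTensor (F := F) V X) (Kudla.subTensor (F := F) V Y))
    (fun w hw => ⟨hLX w hw.1, hLY w hw.2⟩) (fun w hw => ⟨hLY w hw.1, hLX w hw.2⟩)
  rw [Kudla.normalizedAbs_det_tensorEquiv (E := E) X ⟨h, hhX⟩, hinf] at hYX
  have hdet := Kudla.det_restrict_ne_zero (Kudla.tensorEquiv hV (p h))
    (L := Kudla.subTensor (F := F) V Y ⊓ Kudla.subTensor (F := F) V X)
    (fun w hw => ⟨hLY w hw.1, hLX w hw.2⟩)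
  have hd := Kudla.normalizedAbs_pos hdet
  have hnX := Kudla.siegelFactor_pos (V := V) (E := E) X ⟨h, hhX⟩
  have hnY := Kudla.siegelFactor_pos (V := V) (E := E) Y ⟨h, hhY⟩
  exact Units.ext (Kudla.eq_of_reciprocal_ratios hnX hnY hd (κX ⟨h, hhX⟩).ne_zero hXY hYX)
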